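/- arXiv:2602.14206 — 7 statements merged into one kernel-verified Lean document; each statement's English description precedes it below -/
import Mathlib

section
/- Let n ≥ 4, let (a_{ij})_{1≤i,j≤n} and (b_{ij})_{1≤i,j≤n} be symmetric real arrays such that Σ_{j≠i} b_{ij} = 0 for every i, and let π be a uniformly distributed random permutation of {1,…,n}. Set S = Σ_{i≠j} a_{ij} b_{π(i)π(j)}, μ₂ = (1/(n(n−1))) Σ_{i≠j} b_{ij}², S₁ = Σ_{i≠j} a_{ij}², L_i = Σ_{j≠i} a_{ij}, S₂ = Σ_{i=1}^n L_i², S₃ = Σ_{i=1}^n L_i. Then E[S] = 0 and Var(S) = μ₂·{ 2S₁ − (4/(n−2))(S₂ − S₁) + (2/((n−2)(n−3)))(S₃² + 2S₁ − 4S₂) }. -/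
open Finset

/-- Expectation with respect to a uniformly distributed random permutation of `{1, …, n}`:
the average of `f` over the symmetric group on `Fin n`. -/
noncomputable def permE (n : ℕ) (f : Equiv.Perm (Fin n) → ℝ) : ℝ :=
  (∑ π : Equiv.Perm (Fin n), f π) / (Nat.factorial n)

lemma permE_const_mul (n : ℕ) (c : ℝ) (f : Equiv.Perm (Fin n) → ℝ) :
    permE n (fun π => c * f π) = c * permE n f := by
  simp only [permE, ← mul_sum, mul_div_assoc]

lemma permE_sum {ι : Type*} (n : ℕ) (s : Finset ι) (f : ι → Equiv.Perm (Fin n) → ℝ) :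
    permE n (fun π => ∑ i ∈ s, f i π) = ∑ i ∈ s, permE n (f i) := by
  simp only [permE, ← sum_div]
  rw [sum_comm]

lemma permE_const (n : ℕ) (c : ℝ) : permE n (fun _ => c) = c := by
  have h : (n.factorial : ℝ) ≠ 0 := by positivity
  simp [permE, Fintype.card_perm, h]

lemma permE_comp_mul_right (n : ℕ) (σ : Equiv.Perm (Fin n)) (f : Equiv.Perm (Fin n) → ℝ) :
    permE n (fun π => f (π * σ)) = permE n f := by
  simp only [permE]
  rw [← Equiv.sum_comp (Equiv.mulRight σ) f]
  rfl

/-- A function constant off `s` has the evident sum. -/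
lemma sum_eq_of_constant_off {n : ℕ} (s : Finset (Fin n)) (f : Fin n → ℝ) (l : Fin n)
    (h : ∀ m ∉ s, f m = f l) : ∑ m, f m = ∑ m ∈ s, f m + ((n : ℝ) - #s) * f l := by
  have hcompl : ∑ m ∈ sᶜ, f m = ∑ _m ∈ sᶜ, f l :=
    sum_congr rfl fun m hm => h m (mem_compl.mp hm)
  rw [← sum_add_sum_compl s f, hcompl, sum_const, nsmul_eq_mul, card_compl, Fintype.card_fin, Nat.cast_sub (by simpa using card_le_univ s)]

section Moments

variable {n : ℕ} {B : Fin n → Fin n → ℝ}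

lemma permE_entry_eq_zero (hn : 2 ≤ n) (hdiag : ∀ i, B i i = 0)
    (hrow : ∀ i, ∑ j, B i j = 0) (i j : Fin n) :
    permE n (fun π => B (π i) (π j)) = 0 := by
  have hn' : (2 : ℝ) ≤ n := by exact_mod_cast hn
  by_cases hij : i = j
  · subst hij
    simp [hdiag, permE]
  have h := sum_eq_of_constant_off {i} (fun m => permE n (fun π => B (π i) (π m))) j (by
    intro m hm
    simp only [mem_singleton] at hm
    rw [← permE_comp_mul_right n (Equiv.swap m j)]
    simp [Equiv.swap_apply_of_ne_of_ne (Ne.symm hm) hij])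
  rw [← permE_sum] at h
  have h0 : ∀ π : Equiv.Perm (Fin n), ∑ m, B (π i) (π m) = 0 := fun π => by
    rw [Equiv.sum_comp π (B (π i)), hrow]
  simp only [h0, permE_const, sum_singleton, hdiag, card_singleton, Nat.cast_one, zero_add] at h
  exact (mul_eq_zero.mp h.symm).resolve_left (by linarith)

lemma permE_entry_sq (hn : 2 ≤ n) (hdiag : ∀ i, B i i = 0) {i j : Fin n} (hij : i ≠ j) :
    permE n (fun π => B (π i) (π j) * B (π i) (π j)) =
      (1 / ((n : ℝ) * (n - 1))) * ∑ x, ∑ y, B x y ^ 2 := by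
  have hn' : (2 : ℝ) ≤ n := by exact_mod_cast hn
  have h := sum_eq_of_constant_off {i}
    (fun m => permE n (fun π => B (π i) (π m) * B (π i) (π m))) j (by
      intro m hm
      simp only [mem_singleton] at hm
      rw [← permE_comp_mul_right n (Equiv.swap m j)]
      simp [Equiv.swap_apply_of_ne_of_ne (Ne.symm hm) hij])
  rw [← permE_sum] at h
  have h0 : ∀ π : Equiv.Perm (Fin n),
      ∑ m, B (π i) (π m) * B (π i) (π m) = ∑ y, B (π i) y ^ 2 := fun π => by
    rw [← Equiv.sum_comp π (fun y => B (π i) y ^ 2)]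
    simp only [sq]
  have h1 := sum_eq_of_constant_off ∅ (fun m => permE n (fun π => ∑ y, B (π m) y ^ 2)) i (by
    intro m _
    rw [← permE_comp_mul_right n (Equiv.swap m i)]
    simp)
  rw [← permE_sum] at h1
  have h2 : ∀ π : Equiv.Perm (Fin n),
      ∑ m, ∑ y, B (π m) y ^ 2 = ∑ x, ∑ y, B x y ^ 2 := fun π =>
    Equiv.sum_comp π (fun x => ∑ y, B x y ^ 2)
  simp only [h0, permE_const, sum_singleton, hdiag, card_singleton, Nat.cast_one, zero_add,
    mul_zero] at h
  simp only [h2, permE_const, sum_empty, card_empty, Nat.cast_zero, zero_add, sub_zero, h] at h1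
  have h3 : (n : ℝ) - 1 ≠ 0 := by linarith
  have h4 : (n : ℝ) ≠ 0 := by linarith
  rw [h1]
  field_simp

/-- Sums over the last index of the mixed second moments of the entries vanish. -/
lemma sum_permE_entry_mul (hrow : ∀ i, ∑ j, B i j = 0) (i j k : Fin n) :
    ∑ l, permE n (fun π => B (π i) (π j) * B (π k) (π l)) = 0 := by
  rw [← permE_sum]
  have h0 : ∀ π : Equiv.Perm (Fin n), ∑ l, B (π i) (π j) * B (π k) (π l) = 0 := fun π => by
    rw [← mul_sum, Equiv.sum_comp π (B (π k)), hrow, mul_zero]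
  simp only [h0, permE_const]

lemma permE_entry_mul_of_common (hn : 4 ≤ n) (hdiag : ∀ i, B i i = 0)
    (hrow : ∀ i, ∑ j, B i j = 0) {i j k : Fin n} (hij : i ≠ j) (hik : i ≠ k) (hjk : j ≠ k) :
    permE n (fun π => B (π i) (π j) * B (π i) (π k)) =
      -((1 / ((n : ℝ) * (n - 1))) * ∑ x, ∑ y, B x y ^ 2) / (n - 2) := by
  have hn' : (4 : ℝ) ≤ n := by exact_mod_cast hn
  have h := sum_eq_of_constant_off {i, j}
    (fun m => permE n (fun π => B (π i) (π j) * B (π i) (π m))) k (by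
      intro m hm
      simp only [mem_insert, mem_singleton, not_or] at hm
      rw [← permE_comp_mul_right n (Equiv.swap m k)]
      simp [Equiv.swap_apply_of_ne_of_ne (Ne.symm hm.1) hik,
        Equiv.swap_apply_of_ne_of_ne (Ne.symm hm.2) hjk])
  rw [sum_permE_entry_mul hrow, sum_pair hij, permE_entry_sq (by lia) hdiag hij,
    card_pair hij] at h
  simp only [hdiag, mul_zero, permE_const, zero_add, Nat.cast_ofNat] at h
  rw [eq_div_iff (by linarith)]
  linarith

lemma permE_entry_mul_of_distinct (hn : 4 ≤ n) (hsymm : ∀ i j, B i j = B j i)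
    (hdiag : ∀ i, B i i = 0) (hrow : ∀ i, ∑ j, B i j = 0) {i j k l : Fin n} (hij : i ≠ j)
    (hik : i ≠ k) (hil : i ≠ l) (hjk : j ≠ k) (hjl : j ≠ l) (hkl : k ≠ l) :
    permE n (fun π => B (π i) (π j) * B (π k) (π l)) =
      2 * ((1 / ((n : ℝ) * (n - 1))) * ∑ x, ∑ y, B x y ^ 2) / ((n - 2) * (n - 3)) := by
  have hn' : (4 : ℝ) ≤ n := by exact_mod_cast hn
  have h := sum_eq_of_constant_off {i, j, k}
    (fun m => permE n (fun π => B (π i) (π j) * B (π k) (π m))) l (by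
      intro m hm
      simp only [mem_insert, mem_singleton, not_or] at hm
      rw [← permE_comp_mul_right n (Equiv.swap m l)]
      simp [Equiv.swap_apply_of_ne_of_ne (Ne.symm hm.1) hil,
        Equiv.swap_apply_of_ne_of_ne (Ne.symm hm.2.1) hjl,
        Equiv.swap_apply_of_ne_of_ne (Ne.symm hm.2.2) hkl])
  have hi := permE_entry_mul_of_common hn hdiag hrow hij hik hjk
  have hj := permE_entry_mul_of_common hn hdiag hrow hij.symm hjk hik
  have hi' : permE n (fun π => B (π i) (π j) * B (π k) (π i)) =
      permE n (fun π => B (π i) (π j) * B (π i) (π k)) := by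
    simp only [fun π : Equiv.Perm (Fin n) => hsymm (π k) (π i)]
  have hj' : permE n (fun π => B (π i) (π j) * B (π k) (π j)) =
      permE n (fun π => B (π j) (π i) * B (π j) (π k)) := by
    simp only [fun π : Equiv.Perm (Fin n) => hsymm (π k) (π j),
      fun π : Equiv.Perm (Fin n) => hsymm (π i) (π j)]
  rw [sum_permE_entry_mul hrow, sum_insert (by simp [hij, hik]), sum_pair hjk,
    card_insert_of_notMem (by simp [hij, hik]), card_pair hjk, hi', hj', hi, hj] at h
  simp only [hdiag, mul_zero, permE_const, add_zero] at h
  push_cast at h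
  have h2 : (n : ℝ) - 2 ≠ 0 := by linarith
  have h3 : (n : ℝ) - 3 ≠ 0 := by linarith
  generalize (1 / ((n : ℝ) * (n - 1))) * ∑ x, ∑ y, B x y ^ 2 = μ at h ⊢
  rw [eq_div_iff (mul_ne_zero h2 h3)]
  field_simp at h
  linarith

/-- The mixed second moments of the off-diagonal entries, in terms of the coincidences
between the two index pairs. -/
lemma permE_entry_mul (hn : 4 ≤ n) (hsymm : ∀ i j, B i j = B j i)
    (hdiag : ∀ i, B i i = 0) (hrow : ∀ i, ∑ j, B i j = 0) {μ c d : ℝ}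
    (hμ : μ = (1 / ((n : ℝ) * (n - 1))) * ∑ x, ∑ y, B x y ^ 2)
    (hc : c = -μ / (n - 2)) (hd : d = 2 * μ / ((n - 2) * (n - 3)))
    {i j k l : Fin n} (hij : i ≠ j) (hkl : k ≠ l) :
    permE n (fun π => B (π i) (π j) * B (π k) (π l)) =
      (μ - 2 * c + d) * ((if k = i then if l = j then 1 else 0 else 0)
          + (if k = j then if l = i then 1 else 0 else 0))
        + (c - d) * ((if k = i then 1 else 0) + (if l = j then 1 else 0)
          + (if l = i then 1 else 0) + (if k = j then 1 else 0)) + d := by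
  have hsq : ∀ {i j : Fin n}, i ≠ j →
      permE n (fun π => B (π i) (π j) * B (π i) (π j)) = μ := fun h => by
    rw [hμ, permE_entry_sq (by lia) hdiag h]
  have hcom : ∀ {i j k : Fin n}, i ≠ j → i ≠ k → j ≠ k →
      permE n (fun π => B (π i) (π j) * B (π i) (π k)) = c := fun h₁ h₂ h₃ => by
    rw [hc, hμ, permE_entry_mul_of_common hn hdiag hrow h₁ h₂ h₃]
  have hflip : ∀ i j k l : Fin n, permE n (fun π => B (π i) (π j) * B (π k) (π l)) =
      permE n (fun π => B (π i) (π j) * B (π l) (π k)) := fun i j k l => by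
    simp only [fun π : Equiv.Perm (Fin n) => hsymm (π k) (π l)]
  have hflip' : ∀ i j k l : Fin n, permE n (fun π => B (π i) (π j) * B (π k) (π l)) =
      permE n (fun π => B (π j) (π i) * B (π k) (π l)) := fun i j k l => by
    simp only [fun π : Equiv.Perm (Fin n) => hsymm (π i) (π j)]
  by_cases hki : k = i
  · subst hki
    by_cases hlj : l = j
    · subst hlj
      rw [hsq hij]
      simp [hij, hij.symm]
      ring
    · rw [hcom hij hkl (Ne.symm hlj)]
      simp [hij, hkl.symm, hlj]
  by_cases hkj : k = j
  · subst hkj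
    by_cases hli : l = i
    · subst hli
      rw [hflip, hsq hij]
      simp [hij, hij.symm]
      ring
    · rw [hflip', hcom hij.symm hkl (Ne.symm hli)]
      simp [hki, hkl.symm, hli]
  by_cases hli : l = i
  · subst hli
    rw [hflip, hcom hij hkl.symm (Ne.symm hkj)]
    simp [hki, hkj, hij]
  by_cases hlj : l = j
  · subst hlj
    rw [hflip, hflip', hcom hij.symm hkl.symm (Ne.symm hki)]
    simp [hki, hkj, hij.symm]
  rw [permE_entry_mul_of_distinct hn hsymm hdiag hrow hij (Ne.symm hki) (Ne.symm hli)
    (Ne.symm hkj) (Ne.symm hlj) hkl, ← hμ, ← hd]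
  simp [hki, hkj, hli, hlj]

variable {A : Fin n → Fin n → ℝ}

lemma permE_statistic_eq_zero (hn : 2 ≤ n) (hdiag : ∀ i, B i i = 0)
    (hrow : ∀ i, ∑ j, B i j = 0) :
    permE n (fun π => ∑ i, ∑ j, A i j * B (π i) (π j)) = 0 := by
  simp only [permE_sum, permE_const_mul, permE_entry_eq_zero hn hdiag hrow, mul_zero,
    sum_const_zero]

lemma permE_statistic_sq (hn : 4 ≤ n) (hAsymm : ∀ i j, A i j = A j i) (hAdiag : ∀ i, A i i = 0)
    (hsymm : ∀ i j, B i j = B j i) (hdiag : ∀ i, B i i = 0) (hrow : ∀ i, ∑ j, B i j = 0)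
    {μ c d : ℝ} (hμ : μ = (1 / ((n : ℝ) * (n - 1))) * ∑ x, ∑ y, B x y ^ 2)
    (hc : c = -μ / (n - 2)) (hd : d = 2 * μ / ((n - 2) * (n - 3))) :
    permE n (fun π => (∑ i, ∑ j, A i j * B (π i) (π j)) ^ 2) =
      2 * (μ - 2 * c + d) * ∑ i, ∑ j, A i j ^ 2
        + 4 * (c - d) * ∑ i, (∑ j, A i j) ^ 2 + d * (∑ i, ∑ j, A i j) ^ 2 := by
  have hinner : ∀ i j, i ≠ j →
      ∑ k, ∑ l, A k l * permE n (fun π => B (π i) (π j) * B (π k) (π l)) =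
        2 * (μ - 2 * c + d) * A i j + 2 * (c - d) * (∑ m, A i m + ∑ m, A j m)
          + d * ∑ k, ∑ l, A k l := by
    intro i j hij
    have hterm : ∀ k l, A k l * permE n (fun π => B (π i) (π j) * B (π k) (π l)) =
        (μ - 2 * c + d) * ((if k = i then if l = j then A k l else 0 else 0)
            + (if k = j then if l = i then A k l else 0 else 0))
          + (c - d) * ((if k = i then A k l else 0) + (if l = j then A k l else 0)
            + (if l = i then A k l else 0) + (if k = j then A k l else 0)) + d * A k l := by
      intro k l
      by_cases hkl : k = l
      · subst hkl
        simp [hAdiag]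
      rw [permE_entry_mul hn hsymm hdiag hrow hμ hc hd hij hkl]
      split_ifs <;> ring
    have hrowpick : ∀ x, ∑ k, ∑ l, (if k = x then A k l else 0) = ∑ l, A x l := fun x => by
      rw [sum_comm]
      simp
    have hcolpick : ∀ x, ∑ k, ∑ l, (if l = x then A k l else 0) = ∑ l, A x l := fun x => by
      simp [fun k => hAsymm k x]
    have hpick : ∀ x y,
        ∑ k, ∑ l, (if k = x then if l = y then A k l else 0 else 0) = A x y := fun x y => by
      rw [sum_comm]
      simp
    simp only [hterm, sum_add_distrib, ← mul_sum, hrowpick, hcolpick, hpick, hAsymm j i]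
    ring
  have hexp : ∀ π : Equiv.Perm (Fin n), (∑ i, ∑ j, A i j * B (π i) (π j)) ^ 2 =
      ∑ i, ∑ j, A i j * ∑ k, ∑ l, A k l * (B (π i) (π j) * B (π k) (π l)) := by
    intro π
    simp only [sq, sum_mul, mul_sum]
    refine sum_congr rfl fun i _ => sum_congr rfl fun j _ => sum_congr rfl fun k _ =>
      sum_congr rfl fun l _ => by ring
  have houter : ∀ i j,
      A i j * ∑ k, ∑ l, A k l * permE n (fun π => B (π i) (π j) * B (π k) (π l)) =
        2 * (μ - 2 * c + d) * A i j ^ 2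
          + 2 * (c - d) * (A i j * ∑ m, A i m + A i j * ∑ m, A j m)
          + d * (A i j * ∑ k, ∑ l, A k l) := by
    intro i j
    by_cases hij : i = j
    · subst hij
      simp [hAdiag]
    rw [hinner i j hij]
    ring
  have hleft : ∑ i, ∑ j, A i j * ∑ m, A i m = ∑ i, (∑ j, A i j) ^ 2 := by
    simp only [← sum_mul, sq]
  have hright : ∑ i, ∑ j, A i j * ∑ m, A j m = ∑ i, (∑ j, A i j) ^ 2 := by
    rw [sum_comm, ← hleft]
    exact sum_congr rfl fun i _ => sum_congr rfl fun j _ => by rw [hAsymm]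
  have htotal : ∑ i, ∑ j, A i j * ∑ k, ∑ l, A k l = (∑ i, ∑ j, A i j) ^ 2 := by
    simp only [← sum_mul, sq]
  simp only [hexp, permE_sum, permE_const_mul, houter, sum_add_distrib, ← mul_sum]
  simp only [hleft, hright, htotal]
  ring

end Moments

/-- variance of the double-indexed linear permutation statistic
`S = ∑_{i ≠ j} a_{ij} b_{π(i)π(j)}` under a uniform random permutation `π`. -/
theorem stmt5 (n : ℕ) (hn : 4 ≤ n)
    (a b : Fin n → Fin n → ℝ)
    (ha_symm : ∀ i j, a i j = a j i) (hb_symm : ∀ i j, b i j = b j i)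
    (hb_rowsum : ∀ i : Fin n, ∑ j ∈ univ \ {i}, b i j = 0)
    (S : Equiv.Perm (Fin n) → ℝ)
    (hS : ∀ π, S π = ∑ i : Fin n, ∑ j ∈ univ \ {i}, a i j * b (π i) (π j))
    (μ₂ S₁ S₂ S₃ : ℝ) (L : Fin n → ℝ)
    (hμ₂ : μ₂ = (1 / ((n : ℝ) * (n - 1))) * ∑ i : Fin n, ∑ j ∈ univ \ {i}, (b i j) ^ 2)
    (hS₁ : S₁ = ∑ i : Fin n, ∑ j ∈ univ \ {i}, (a i j) ^ 2)
    (hL : ∀ i, L i = ∑ j ∈ univ \ {i}, a i j)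
    (hS₂ : S₂ = ∑ i : Fin n, (L i) ^ 2)
    (hS₃ : S₃ = ∑ i : Fin n, L i) :
    permE n S = 0 ∧
      permE n (fun π => (S π) ^ 2) - (permE n S) ^ 2 =
        μ₂ * (2 * S₁ - (4 / ((n : ℝ) - 2)) * (S₂ - S₁)
          + (2 / (((n : ℝ) - 2) * ((n : ℝ) - 3))) * (S₃ ^ 2 + 2 * S₁ - 4 * S₂)) := by
  have hn' : (4 : ℝ) ≤ n := by exact_mod_cast hn
  have hoff : ∀ (i : Fin n) (f : Fin n → ℝ),
      ∑ j ∈ univ \ {i}, f j = ∑ j, if i = j then 0 else f j := fun i f => by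
    rw [← sum_sdiff (subset_univ {i}), sum_singleton, if_pos rfl, add_zero]
    refine sum_congr rfl fun j hj => (if_neg ?_).symm
    simp only [mem_sdiff, mem_univ, mem_singleton, true_and] at hj
    exact Ne.symm hj
  set A : Fin n → Fin n → ℝ := fun i j => if i = j then 0 else a i j with hA
  set B : Fin n → Fin n → ℝ := fun i j => if i = j then 0 else b i j with hB
  have hAsymm : ∀ i j, A i j = A j i := fun i j => by simp only [hA, eq_comm, ha_symm i j]
  have hBsymm : ∀ i j, B i j = B j i := fun i j => by simp only [hB, eq_comm, hb_symm i j]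
  have hAdiag : ∀ i, A i i = 0 := fun i => if_pos rfl
  have hBdiag : ∀ i, B i i = 0 := fun i => if_pos rfl
  have hBrow : ∀ i, ∑ j, B i j = 0 := fun i => by rw [← hb_rowsum i, hoff]
  have hsq : ∀ f : Fin n → Fin n → ℝ, ∑ i, ∑ j ∈ univ \ {i}, f i j ^ 2 =
      ∑ i, ∑ j, (if i = j then 0 else f i j) ^ 2 := fun f => by
    simp only [hoff, ite_pow, ne_eq, OfNat.ofNat_ne_zero, not_false_eq_true, zero_pow]
  have hL' : ∀ i, L i = ∑ j, A i j := fun i => by rw [hL, hoff]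
  have hS' : S = fun π => ∑ i, ∑ j, A i j * B (π i) (π j) := by
    funext π
    rw [hS]
    refine sum_congr rfl fun i _ => ?_
    rw [hoff]
    refine sum_congr rfl fun j _ => ?_
    by_cases hij : i = j <;> simp [hA, hB, hij]
  rw [hsq] at hμ₂ hS₁
  have hmean : permE n S = 0 := by
    rw [hS']
    exact permE_statistic_eq_zero (by lia) hBdiag hBrow
  refine ⟨hmean, ?_⟩
  rw [hmean, hS', permE_statistic_sq hn hAsymm hAdiag hBsymm hBdiag hBrow hμ₂ rfl rfl, ← hS₁]
  simp only [← hL', ← hS₂, ← hS₃]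
  have h2 : (n : ℝ) - 2 ≠ 0 := by linarith
  have h3 : (n : ℝ) - 3 ≠ 0 := by linarith
  field_simp
  ring
end

section
/- Let n ≥ 3, let (b_{ij})_{1≤i,j≤n} be a real array with Σ_{s≠r} b_{rs} = 0 for every r, let π be a uniformly distributed random permutation of {1,…,n}, and let i, j, ℓ be three distinct indices. Then E[ b_{π(i)π(j)} b_{π(i)π(ℓ)} ] = −μ₂/(n−2), where μ₂ = (1/(n(n−1))) Σ_{r≠s} b_{rs}². -/
open Finset

/-- Averaging a function of `π x` against a weight fixed by the swap of `x` and `y` does not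
distinguish `x` from `y`. -/
lemma sum_perm_swap {α : Type*} [Fintype α] [DecidableEq α] (F : Equiv.Perm α → α → ℝ)
    (x y : α) (hF : ∀ (π : Equiv.Perm α) (s : α), F (π * Equiv.swap x y) s = F π s) :
    ∑ π : Equiv.Perm α, F π (π x) = ∑ π : Equiv.Perm α, F π (π y) := by
  rw [← Equiv.sum_comp (Equiv.mulRight (Equiv.swap x y))]
  simp [hF]

/-- Summing over the images of the indices other than `i` is summing over the values other
than `π i`. -/
lemma sum_sdiff_perm {α : Type*} [Fintype α] [DecidableEq α] (π : Equiv.Perm α) (i : α)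
    (f : α → ℝ) : ∑ x ∈ univ \ {i}, f (π x) = ∑ s ∈ univ \ {π i}, f s :=
  Finset.sum_equiv π (by simp) (by simp)

/-- A function of the image of one index, summed over all permutations. -/
lemma card_mul_sum_perm_apply {α : Type*} [Fintype α] [DecidableEq α] (R : α → ℝ) (i : α) :
    (Fintype.card α : ℝ) * ∑ π : Equiv.Perm α, R (π i) =
      (Fintype.card α).factorial * ∑ r, R r := by
  calc (Fintype.card α : ℝ) * ∑ π : Equiv.Perm α, R (π i)
      = ∑ x : α, ∑ π : Equiv.Perm α, R (π x) := by
        rw [Finset.sum_congr rfl fun x _ => sum_perm_swap (fun _ => R) x i fun _ _ => rfl]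
        simp
    _ = ∑ π : Equiv.Perm α, ∑ r, R r := by
        rw [Finset.sum_comm]
        exact Finset.sum_congr rfl fun π _ => Equiv.sum_comp π R
    _ = (Fintype.card α).factorial * ∑ r, R r := by
        simp [Fintype.card_perm]

/-- A function of the images of two distinct indices, summed over all permutations. -/
lemma sum_perm_apply_pair {α : Type*} [Fintype α] [DecidableEq α] (f : α → α → ℝ) {i j : α}
    (hij : i ≠ j) :
    ((Fintype.card α : ℝ) - 1) * ∑ π : Equiv.Perm α, f (π i) (π j) =
      ∑ π : Equiv.Perm α, ∑ s ∈ univ \ {π i}, f (π i) s := by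
  have hcard : ((univ \ {i} : Finset α).card : ℝ) = (Fintype.card α : ℝ) - 1 := by
    rw [Finset.cast_card_sdiff (Finset.subset_univ _)]
    simp
  have hswap : ∀ x ∈ univ \ {i},
      ∑ π : Equiv.Perm α, f (π i) (π x) = ∑ π : Equiv.Perm α, f (π i) (π j) := by
    intro x hx
    have hxi : i ≠ x := by simpa [eq_comm] using hx
    refine sum_perm_swap (fun π s => f (π i) s) x j fun π s => ?_
    simp [Equiv.swap_apply_of_ne_of_ne hxi hij]
  rw [← hcard, ← nsmul_eq_mul, ← Finset.sum_const, ← Finset.sum_congr rfl hswap, Finset.sum_comm]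
  exact Finset.sum_congr rfl fun π _ => sum_sdiff_perm π i _

/-- When the off-diagonal row sums vanish, the products with one shared index reduce to squares. -/
lemma sum_perm_apply_triple {α : Type*} [Fintype α] [DecidableEq α] (b : α → α → ℝ)
    (hb : ∀ r, ∑ s ∈ univ \ {r}, b r s = 0) {i j l : α}
    (hij : i ≠ j) (hil : i ≠ l) (hjl : j ≠ l) :
    ((Fintype.card α : ℝ) - 2) * ∑ π : Equiv.Perm α, b (π i) (π j) * b (π i) (π l) =
      -∑ π : Equiv.Perm α, b (π i) (π j) ^ 2 := by
  have hj : j ∈ univ \ {i} := by simpa [eq_comm] using hij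
  have hcard : (((univ \ {i}).erase j : Finset α).card : ℝ) = (Fintype.card α : ℝ) - 2 := by
    rw [Finset.cast_card_erase_of_mem hj, Finset.cast_card_sdiff (Finset.subset_univ _)]
    simp
    ring
  have hswap : ∀ x ∈ (univ \ {i}).erase j,
      ∑ π : Equiv.Perm α, b (π i) (π j) * b (π i) (π x) =
        ∑ π : Equiv.Perm α, b (π i) (π j) * b (π i) (π l) := by
    intro x hx
    obtain ⟨hxj, hxi⟩ : x ≠ j ∧ x ≠ i := by simpa using hx
    refine sum_perm_swap (fun π s => b (π i) (π j) * b (π i) s) x l fun π s => ?_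
    simp [Equiv.swap_apply_of_ne_of_ne hxi.symm hil, Equiv.swap_apply_of_ne_of_ne hxj.symm hjl]
  have htotal : ∑ x ∈ univ \ {i}, ∑ π : Equiv.Perm α, b (π i) (π j) * b (π i) (π x) = 0 := by
    rw [Finset.sum_comm]
    refine Finset.sum_eq_zero fun π _ => ?_
    rw [← Finset.mul_sum, sum_sdiff_perm π i (b (π i)), hb, mul_zero]
  rw [← Finset.add_sum_erase _ _ hj, Finset.sum_congr rfl hswap, Finset.sum_const,
    nsmul_eq_mul, hcard] at htotal
  simp only [pow_two]
  linarith

/-- one shared index. For a uniformly distributed random permutation `π` and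
distinct indices `i, j, ℓ`, `E[b_{π(i)π(j)} b_{π(i)π(ℓ)}] = -μ₂/(n-2)` provided all row sums
of `b` vanish. -/
theorem stmt6 (n : ℕ) (hn : 3 ≤ n)
    (b : Fin n → Fin n → ℝ)
    (hb_rowsum : ∀ r : Fin n, ∑ s ∈ univ \ {r}, b r s = 0)
    (μ₂ : ℝ)
    (hμ₂ : μ₂ = (1 / ((n : ℝ) * (n - 1))) * ∑ r : Fin n, ∑ s ∈ univ \ {r}, (b r s) ^ 2)
    (i j ℓ : Fin n) (hij : i ≠ j) (hiℓ : i ≠ ℓ) (hjℓ : j ≠ ℓ) :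
    permE n (fun π => b (π i) (π j) * b (π i) (π ℓ)) = -μ₂ / ((n : ℝ) - 2) := by
  have htriple := sum_perm_apply_triple b hb_rowsum hij hiℓ hjℓ
  have hpair := sum_perm_apply_pair (fun r s => b r s ^ 2) hij
  have hsingle := card_mul_sum_perm_apply (fun r => ∑ s ∈ univ \ {r}, b r s ^ 2) i
  simp only [Fintype.card_fin] at htriple hpair hsingle
  have hn' : (3 : ℝ) ≤ n := by exact_mod_cast hn
  have h0 : (n : ℝ) ≠ 0 := by linarith
  have h1 : (n : ℝ) - 1 ≠ 0 := by linarith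
  have h2 : (n : ℝ) - 2 ≠ 0 := by linarith
  have hfact : (n.factorial : ℝ) ≠ 0 := by exact_mod_cast n.factorial_ne_zero
  rw [← hpair] at hsingle
  rw [permE, hμ₂]
  field_simp
  linear_combination (n : ℝ) * (n - 1) * htriple - hsingle
end

section
/- Let n ≥ 4, let (b_{ij})_{1≤i,j≤n} be a symmetric real array with Σ_{s≠r} b_{rs} = 0 for every r, let π be a uniformly distributed random permutation of {1,…,n}, and let i, j, k, ℓ be four distinct indices. Then E[ b_{π(i)π(j)} b_{π(k)π(ℓ)} ] = 2μ₂/((n−2)(n−3)), where μ₂ = (1/(n(n−1))) Σ_{r≠s} b_{rs}². -/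
open Finset

/-- Sums over the symmetric group are invariant under relabelling the positions. -/
lemma sum_perm_mul_right {α : Type*} [Fintype α] [DecidableEq α] (σ : Equiv.Perm α)
    (f : Equiv.Perm α → ℝ) : ∑ π, f (π * σ) = ∑ π, f π :=
  Equiv.sum_comp (Equiv.mulRight σ) f

lemma sum_sdiff_singleton_comp_perm {α : Type*} [Fintype α] [DecidableEq α]
    (π : Equiv.Perm α) (k : α) (f : α → ℝ) :
    ∑ m ∈ univ \ {k}, f (π m) = ∑ s ∈ univ \ {π k}, f s :=
  Finset.sum_equiv π (by simp) (by simp)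

/-- If the off-diagonal row sums of `b` vanish, then so do the sums of
`∑ π, g π * b (π k) (π m)` over `m ≠ k`. -/
lemma sum_perm_mul_row_eq_zero {α : Type*} [Fintype α] [DecidableEq α] {b : α → α → ℝ}
    (hb : ∀ r, ∑ s ∈ univ \ {r}, b r s = 0) (g : Equiv.Perm α → ℝ) (k : α) :
    ∑ m ∈ univ \ {k}, ∑ π : Equiv.Perm α, g π * b (π k) (π m) = 0 := by
  rw [Finset.sum_comm]
  refine Finset.sum_eq_zero fun π _ => ?_
  rw [← Finset.mul_sum, sum_sdiff_singleton_comp_perm π k (b (π k)), hb, mul_zero]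

/-- The second moment of `b (π i) (π j)` does not depend on the pair `i ≠ j`. -/
lemma sum_perm_sq_eq {α : Type*} [Fintype α] [DecidableEq α] {b : α → α → ℝ}
    (hb : ∀ r s, b r s = b s r) {i j r s : α} (hij : i ≠ j) (hrs : r ≠ s) :
    ∑ π : Equiv.Perm α, b (π r) (π s) ^ 2 = ∑ π : Equiv.Perm α, b (π i) (π j) ^ 2 := by
  have key : ∀ u v w : α, u ≠ v → u ≠ w →
      ∑ π : Equiv.Perm α, b (π u) (π v) ^ 2 = ∑ π : Equiv.Perm α, b (π u) (π w) ^ 2 := by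
    intro u v w huv huw
    rw [← sum_perm_mul_right (Equiv.swap v w)]
    simp [Equiv.swap_apply_of_ne_of_ne huv huw]
  rcases eq_or_ne r i with rfl | hri
  · exact key r s j hrs hij
  · rw [key r s i hrs hri, key i j r hij hri.symm]
    exact Finset.sum_congr rfl fun π _ => by rw [hb]

/-- Averaging over all positions computes the second moment of `b (π i) (π j)`. -/
lemma card_mul_sum_perm_sq {α : Type*} [Fintype α] [DecidableEq α] {b : α → α → ℝ}
    (hb : ∀ r s, b r s = b s r) {i j : α} (hij : i ≠ j) :
    (Fintype.card α : ℝ) * (Fintype.card α - 1) * ∑ π : Equiv.Perm α, b (π i) (π j) ^ 2 =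
      (Fintype.card α).factorial * ∑ r, ∑ s ∈ univ \ {r}, b r s ^ 2 := by
  have hcard : ∀ r : α, ((univ \ {r} : Finset α).card : ℝ) = Fintype.card α - 1 := by
    intro r
    rw [Finset.cast_card_sdiff (by simp)]
    simp
  have hpos : ∑ r, ∑ s ∈ univ \ {r}, ∑ π : Equiv.Perm α, b (π r) (π s) ^ 2 =
      (Fintype.card α : ℝ) * (Fintype.card α - 1) *
        ∑ π : Equiv.Perm α, b (π i) (π j) ^ 2 := by
    have hrow : ∀ r : α, ∑ s ∈ univ \ {r}, ∑ π : Equiv.Perm α, b (π r) (π s) ^ 2 =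
        (Fintype.card α - 1) * ∑ π : Equiv.Perm α, b (π i) (π j) ^ 2 := by
      intro r
      rw [← hcard r, ← nsmul_eq_mul]
      refine Finset.sum_eq_card_nsmul fun s hs => sum_perm_sq_eq hb hij ?_
      rintro rfl
      simp at hs
    simp only [hrow, Finset.sum_const, Finset.card_univ, nsmul_eq_mul, mul_assoc]
  rw [← hpos]
  have hπ : ∀ π : Equiv.Perm α, ∑ r, ∑ s ∈ univ \ {r}, b (π r) (π s) ^ 2 =
      ∑ r, ∑ s ∈ univ \ {r}, b r s ^ 2 := by
    intro π
    rw [← Equiv.sum_comp π fun r => ∑ s ∈ univ \ {r}, b r s ^ 2]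
    exact Finset.sum_congr rfl fun r _ =>
      sum_sdiff_singleton_comp_perm π r fun s => b (π r) s ^ 2
  simp_rw [Finset.sum_comm (t := (univ : Finset (Equiv.Perm α)))]
  simp only [hπ, Finset.sum_const, Finset.card_univ, Fintype.card_perm, nsmul_eq_mul]

/-- Mixed moment of two entries of a row. -/
lemma sum_perm_shared_index {α : Type*} [Fintype α] [DecidableEq α] {b : α → α → ℝ}
    (hrow : ∀ r, ∑ s ∈ univ \ {r}, b r s = 0) {i j k : α}
    (hij : i ≠ j) (hik : i ≠ k) (hjk : j ≠ k) :
    ∑ π : Equiv.Perm α, b (π i) (π j) ^ 2 +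
      ((Fintype.card α : ℝ) - 2) * ∑ π : Equiv.Perm α, b (π i) (π j) * b (π i) (π k) = 0 := by
  have h := sum_perm_mul_row_eq_zero hrow (fun π => b (π i) (π j)) i
  rw [← Finset.add_sum_erase _ _ (show j ∈ univ \ {i} by simp [hij.symm]),
    Finset.sum_eq_card_nsmul (s := (univ \ {i}).erase j)
      (b := ∑ π : Equiv.Perm α, b (π i) (π j) * b (π i) (π k))] at h
  · have hc : ((univ \ {i}).erase j : Finset α) = univ \ {i, j} := by
      ext; simp; tauto
    rw [hc, nsmul_eq_mul, Finset.cast_card_sdiff (by simp), Finset.card_pair hij] at h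
    simpa [sq] using h
  · intro m hm
    simp only [mem_erase, mem_sdiff, mem_univ, mem_singleton, true_and] at hm
    rw [← sum_perm_mul_right (Equiv.swap m k)]
    simp [Equiv.swap_apply_of_ne_of_ne (Ne.symm hm.2) hik,
      Equiv.swap_apply_of_ne_of_ne (Ne.symm hm.1) hjk]

/-- Mixed moment of two entries with no common index. -/
lemma sum_perm_disjoint_indices {α : Type*} [Fintype α] [DecidableEq α] {b : α → α → ℝ}
    (hb : ∀ r s, b r s = b s r) (hrow : ∀ r, ∑ s ∈ univ \ {r}, b r s = 0) {i j k l : α}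
    (hij : i ≠ j) (hik : i ≠ k) (hil : i ≠ l) (hjk : j ≠ k) (hjl : j ≠ l) (hkl : k ≠ l) :
    2 * ∑ π : Equiv.Perm α, b (π i) (π j) * b (π i) (π k) +
      ((Fintype.card α : ℝ) - 3) * ∑ π : Equiv.Perm α, b (π i) (π j) * b (π k) (π l) = 0 := by
  have h := sum_perm_mul_row_eq_zero hrow (fun π => b (π i) (π j)) k
  have hi : ∑ π : Equiv.Perm α, b (π i) (π j) * b (π k) (π i) =
      ∑ π : Equiv.Perm α, b (π i) (π j) * b (π i) (π k) :=
    Finset.sum_congr rfl fun π _ => by rw [hb (π k)]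
  have hj : ∑ π : Equiv.Perm α, b (π i) (π j) * b (π k) (π j) =
      ∑ π : Equiv.Perm α, b (π i) (π j) * b (π i) (π k) := by
    rw [← sum_perm_mul_right (Equiv.swap i j)]
    refine Finset.sum_congr rfl fun π _ => ?_
    simp [Equiv.swap_apply_of_ne_of_ne hik.symm hjk.symm, hb (π j) (π i), hb (π k) (π i)]
  rw [← Finset.add_sum_erase _ _ (show i ∈ univ \ {k} by simp [hik]),
    ← Finset.add_sum_erase _ _ (show j ∈ (univ \ {k}).erase i by simp [hjk, hij.symm]),
    hi, hj, Finset.sum_eq_card_nsmul (s := ((univ \ {k}).erase i).erase j)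
      (b := ∑ π : Equiv.Perm α, b (π i) (π j) * b (π k) (π l))] at h
  · have hc : (((univ \ {k}).erase i).erase j : Finset α) = univ \ {i, j, k} := by
      ext; simp; tauto
    rw [hc, nsmul_eq_mul, Finset.cast_card_sdiff (by simp),
      Finset.card_eq_three.2 ⟨i, j, k, hij, hik, hjk, rfl⟩, Finset.card_univ] at h
    push_cast at h
    linarith
  · intro m hm
    simp only [mem_erase, mem_sdiff, mem_univ, mem_singleton, true_and] at hm
    rw [← sum_perm_mul_right (Equiv.swap m l)]
    simp [Equiv.swap_apply_of_ne_of_ne (Ne.symm hm.2.1) hil,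
      Equiv.swap_apply_of_ne_of_ne (Ne.symm hm.1) hjl,
      Equiv.swap_apply_of_ne_of_ne (Ne.symm hm.2.2) hkl]

/-- all indices distinct. For a uniformly distributed random permutation `π` and
four distinct indices `i, j, k, ℓ`,
`E[b_{π(i)π(j)} b_{π(k)π(ℓ)}] = 2μ₂/((n-2)(n-3))` for a symmetric array `b` with vanishing
row sums. -/
theorem stmt7 (n : ℕ) (hn : 4 ≤ n)
    (b : Fin n → Fin n → ℝ)
    (hb_symm : ∀ r s, b r s = b s r)
    (hb_rowsum : ∀ r : Fin n, ∑ s ∈ univ \ {r}, b r s = 0)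
    (μ₂ : ℝ)
    (hμ₂ : μ₂ = (1 / ((n : ℝ) * (n - 1))) * ∑ r : Fin n, ∑ s ∈ univ \ {r}, (b r s) ^ 2)
    (i j k ℓ : Fin n) (hij : i ≠ j) (hik : i ≠ k) (hiℓ : i ≠ ℓ)
    (hjk : j ≠ k) (hjℓ : j ≠ ℓ) (hkℓ : k ≠ ℓ) :
    permE n (fun π => b (π i) (π j) * b (π k) (π ℓ)) =
      2 * μ₂ / (((n : ℝ) - 2) * ((n : ℝ) - 3)) := by
  have hA := card_mul_sum_perm_sq hb_symm hij
  have hB := sum_perm_shared_index hb_rowsum hij hik hjk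
  have hC := sum_perm_disjoint_indices hb_symm hb_rowsum hij hik hiℓ hjk hjℓ hkℓ
  rw [Fintype.card_fin] at hA hB hC
  have hn' : (4 : ℝ) ≤ n := by exact_mod_cast hn
  have h0 : (n : ℝ) ≠ 0 := by linarith
  have h1 : (n : ℝ) - 1 ≠ 0 := by linarith
  have h2 : (n : ℝ) - 2 ≠ 0 := by linarith
  have h3 : (n : ℝ) - 3 ≠ 0 := by linarith
  have hf : (n.factorial : ℝ) ≠ 0 := by exact_mod_cast n.factorial_ne_zero
  rw [permE, hμ₂]
  generalize ∑ π : Equiv.Perm (Fin n), b (π i) (π j) * b (π k) (π ℓ) = C at *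
  generalize ∑ π : Equiv.Perm (Fin n), b (π i) (π j) * b (π i) (π k) = B at *
  generalize ∑ π : Equiv.Perm (Fin n), b (π i) (π j) ^ 2 = A at *
  generalize ∑ r : Fin n, ∑ s ∈ univ \ {r}, b r s ^ 2 = S at *
  field_simp
  linear_combination (n * (n - 1) * (n - 2) : ℝ) * hC - 2 * (n * (n - 1) : ℝ) * hB + 2 * hA
end

section
/- Let π = πₙ be a uniformly distributed random permutation of {1,…,n} and Tₙ = (1/(n²h₁)) Σ_{i=1}^n b̄_{π(i)} L_i. Then there exists a constant c > 0 (depending only on K) such that Var(Tₙ) ≤ c·h₁/n for all sufficiently large n. -/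
open Finset MeasureTheory Filter ProbabilityTheory

/-- The cumulative distribution function `K̄(x) = ∫_{-∞}^x K(t) dt` of the kernel `K`. -/
noncomputable def kbar (K : ℝ → ℝ) (x : ℝ) : ℝ := ∫ t in Set.Iic x, K t

/-- `a_{ij} = (1/h₁) ∫₀¹ K((u - i/n)/h₁) K((u - j/n)/h₁) du` (indices `1 ≤ i, j ≤ n`). -/
noncomputable def aCoef (K : ℝ → ℝ) (n : ℕ) (h₁ : ℝ) (i j : ℕ) : ℝ :=
  (1 / h₁) * ∫ u in (0:ℝ)..1, K ((u - i / n) / h₁) * K ((u - j / n) / h₁)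

/-- `B_{ij} = ∫₀¹ K̄((v - i/n)/h₂) K̄((v - j/n)/h₂) dv` (indices `1 ≤ i, j ≤ n`). -/
noncomputable def BCoef (K : ℝ → ℝ) (n : ℕ) (h₂ : ℝ) (i j : ℕ) : ℝ :=
  ∫ v in (0:ℝ)..1, kbar K ((v - i / n) / h₂) * kbar K ((v - j / n) / h₂)

/-- `b̄_i = (1/(n-1)) ∑_{k ≠ i} B_{ik}`. -/
noncomputable def bbar (K : ℝ → ℝ) (n : ℕ) (h₂ : ℝ) (i : ℕ) : ℝ :=
  (1 / ((n : ℝ) - 1)) * ∑ k ∈ Finset.Icc 1 n, if k ≠ i then BCoef K n h₂ i k else 0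

/-- `L_i = ∑_{j ≠ i} a_{ij}`. -/
noncomputable def LL (K : ℝ → ℝ) (n : ℕ) (h₁ : ℝ) (i : ℕ) : ℝ :=
  ∑ j ∈ Finset.Icc 1 n, if j ≠ i then aCoef K n h₁ i j else 0

/-- `σ₀² = (2/45) ∫₀¹ (1 - ∫_{-t}^1 K(v) K̄(v+t) dv)² dt`. -/
noncomputable def sigma0sq (K : ℝ → ℝ) : ℝ :=
  (2 / 45) * ∫ t in (0:ℝ)..1, (1 - ∫ v in (-t)..(1:ℝ), K v * kbar K (v + t)) ^ 2

/-! ### Second moments of permutation statistics -/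

section Permutation

variable {ι : Type*} [Fintype ι] [DecidableEq ι]

/-- Summing over all permutations, the image of one index is as good as that of any other. -/
lemma sum_perm_apply_eq (f : ι → ℝ) (i j : ι) :
    ∑ π : Equiv.Perm ι, f (π i) = ∑ π : Equiv.Perm ι, f (π j) := by
  rw [← Equiv.sum_comp (Equiv.mulRight (Equiv.swap i j))]
  simp

lemma sum_perm_mul_apply_eq (f : ι → ℝ) {i j k : ι} (hj : j ≠ i) (hk : k ≠ i) :
    ∑ π : Equiv.Perm ι, f (π i) * f (π j) = ∑ π : Equiv.Perm ι, f (π i) * f (π k) := by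
  rw [← Equiv.sum_comp (Equiv.mulRight (Equiv.swap j k))]
  simp [Equiv.swap_apply_of_ne_of_ne hj.symm hk.symm]

/-- For centred weights, distinct positions of a random permutation are negatively correlated. -/
lemma card_sub_one_mul_sum_perm_mul (f : ι → ℝ) (hf : ∑ i, f i = 0) {i j : ι} (hj : j ≠ i) :
    ((Fintype.card ι : ℝ) - 1) * ∑ π : Equiv.Perm ι, f (π i) * f (π j)
      = -∑ π : Equiv.Perm ι, f (π i) ^ 2 := by
  have htotal : ∑ k, ∑ π : Equiv.Perm ι, f (π i) * f (π k) = 0 := by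
    rw [Finset.sum_comm]
    refine Finset.sum_eq_zero fun π _ => ?_
    rw [← Finset.mul_sum, Equiv.sum_comp π f, hf, mul_zero]
  rw [← Finset.add_sum_erase _ _ (Finset.mem_univ i),
    Finset.sum_congr rfl fun k hk => sum_perm_mul_apply_eq f (Finset.ne_of_mem_erase hk) hj,
    Finset.sum_const, Finset.card_erase_of_mem (Finset.mem_univ i), Finset.card_univ,
    nsmul_eq_mul, Nat.cast_sub (Fintype.card_pos_iff.mpr ⟨i⟩), Nat.cast_one] at htotal
  simp only [← pow_two] at htotal
  linarith

lemma sum_perm_sq_le (f d : ι → ℝ) (hf : ∑ i, f i = 0) (hf1 : ∀ i, |f i| ≤ 1)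
    (hcard : 2 ≤ Fintype.card ι) :
    ∑ π : Equiv.Perm ι, (∑ i, f (π i) * d i) ^ 2
      ≤ 2 * (Fintype.card ι).factorial * ∑ i, d i ^ 2 := by
  have hcard' : (2 : ℝ) ≤ Fintype.card ι := by exact_mod_cast hcard
  obtain ⟨i₀⟩ : Nonempty ι := Fintype.card_pos_iff.mp (by omega)
  set m : ℝ := (Fintype.card ι : ℝ) - 1 with hm
  have hm1 : 1 ≤ m := by linarith
  set V : ℝ := ∑ π : Equiv.Perm ι, f (π i₀) ^ 2 with hV
  have hV0 : 0 ≤ V := Finset.sum_nonneg fun _ _ => sq_nonneg _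
  have hV1 : V ≤ (Fintype.card ι).factorial := by
    calc V ≤ ∑ _π : Equiv.Perm ι, (1 : ℝ) := Finset.sum_le_sum fun π _ => by
          rw [sq_le_one_iff_abs_le_one]; exact hf1 _
      _ = _ := by simp [Fintype.card_perm]
  have hdiag : ∀ i, ∑ π : Equiv.Perm ι, f (π i) ^ 2 = V := fun i =>
    sum_perm_apply_eq (fun k => f k ^ 2) i i₀
  have hcov : ∀ i j, ∑ π : Equiv.Perm ι, f (π i) * f (π j)
      = (if i = j then V + V / m else 0) - V / m := by
    intro i j
    split_ifs with hij
    · subst hij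
      simp only [← pow_two, hdiag]
      ring
    · have := card_sub_one_mul_sum_perm_mul f hf (Ne.symm hij)
      rw [hdiag, ← hm] at this
      field_simp
      linarith
  have hexpand : ∑ π : Equiv.Perm ι, (∑ i, f (π i) * d i) ^ 2
      = (V + V / m) * ∑ i, d i ^ 2 - V / m * (∑ i, d i) ^ 2 := by
    calc ∑ π : Equiv.Perm ι, (∑ i, f (π i) * d i) ^ 2
        = ∑ i, ∑ j, d i * d j * ∑ π : Equiv.Perm ι, f (π i) * f (π j) := by
          simp only [pow_two, Finset.sum_mul_sum]
          simp only [Finset.mul_sum]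
          rw [Finset.sum_comm]
          refine Finset.sum_congr rfl fun i _ => ?_
          rw [Finset.sum_comm]
          refine Finset.sum_congr rfl fun j _ => Finset.sum_congr rfl fun π _ => ?_
          ring
      _ = _ := by
          simp only [hcov, mul_sub, Finset.sum_sub_distrib, mul_ite, mul_zero,
            Finset.sum_ite_eq, Finset.mem_univ, if_true]
          congr 1
          · rw [Finset.mul_sum]
            exact Finset.sum_congr rfl fun i _ => by ring
          · rw [pow_two, Finset.sum_mul_sum]
            simp only [Finset.mul_sum]
            exact Finset.sum_congr rfl fun i _ => Finset.sum_congr rfl fun j _ => by ring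
  have hVm : V / m ≤ V := div_le_self hV0 hm1
  have hVm0 : 0 ≤ V / m := by positivity
  have hd : 0 ≤ ∑ i, d i ^ 2 := Finset.sum_nonneg fun _ _ => sq_nonneg _
  rw [hexpand]
  calc (V + V / m) * ∑ i, d i ^ 2 - V / m * (∑ i, d i) ^ 2
      ≤ (V + V / m) * ∑ i, d i ^ 2 := by
        have := mul_nonneg hVm0 (sq_nonneg (∑ i, d i))
        linarith
    _ ≤ _ := mul_le_mul_of_nonneg_right (by linarith) hd

end Permutation

lemma permE_sq_sub_sq_le (n : ℕ) (f : Equiv.Perm (Fin n) → ℝ) (c : ℝ) :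
    permE n (fun π => f π ^ 2) - permE n f ^ 2 ≤ permE n (fun π => (f π - c) ^ 2) := by
  have hn : (n.factorial : ℝ) ≠ 0 := by exact_mod_cast n.factorial_ne_zero
  have hexpand : permE n (fun π => (f π - c) ^ 2)
      = permE n (fun π => f π ^ 2) - 2 * c * permE n f + c ^ 2 := by
    simp only [permE, sub_sq, Finset.sum_add_distrib, Finset.sum_sub_distrib, Finset.sum_const,
      Finset.card_univ, Fintype.card_perm, Fintype.card_fin, nsmul_eq_mul]
    have : ∑ π, 2 * f π * c = 2 * c * ∑ π, f π := by
      rw [Finset.mul_sum]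
      exact Finset.sum_congr rfl fun π _ => by ring
    rw [this]
    field_simp
  rw [hexpand]
  nlinarith [sq_nonneg (permE n f - c)]

/-- The variance of `s ∑ b_{π(i)} l_i` for weights `b` in `[0, 1]`, with the coefficients `l` centred
at an arbitrary value. -/
lemma permE_variance_le {n : ℕ} (hn : 2 ≤ n) (b l : Fin n → ℝ) (hb0 : ∀ i, 0 ≤ b i)
    (hb1 : ∀ i, b i ≤ 1) (s l₀ : ℝ) :
    permE n (fun π => (s * ∑ i, b (π i) * l i) ^ 2) - permE n (fun π => s * ∑ i, b (π i) * l i) ^ 2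
      ≤ 2 * s ^ 2 * ∑ i, (l i - l₀) ^ 2 := by
  have hn0 : (0 : ℝ) < n := by exact_mod_cast (by omega : 0 < n)
  set β : ℝ := (∑ i, b i) / n with hβ
  have hβ0 : 0 ≤ β := div_nonneg (Finset.sum_nonneg fun i _ => hb0 i) hn0.le
  have hβ1 : β ≤ 1 := by
    rw [hβ, div_le_one hn0]
    simpa using Finset.sum_le_sum fun i (_ : i ∈ Finset.univ) => hb1 i
  have hsum : ∑ i, (b i - β) = 0 := by
    simp only [Finset.sum_sub_distrib, Finset.sum_const, Finset.card_univ, Fintype.card_fin,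
      nsmul_eq_mul, hβ]
    field_simp
    ring
  have habs : ∀ i, |b i - β| ≤ 1 := fun i => by
    rw [abs_le]
    constructor <;> linarith [hb0 i, hb1 i]
  set c : ℝ := s * (β * ∑ i, (l i - l₀) + l₀ * ∑ i, b i) with hc
  refine (permE_sq_sub_sq_le n _ c).trans ?_
  have hcentre : ∀ π : Equiv.Perm (Fin n), s * ∑ i, b (π i) * l i - c
      = s * ∑ i, (b (π i) - β) * (l i - l₀) := by
    intro π
    have : ∑ i, (b (π i) - β) * (l i - l₀)
        = ∑ i, b (π i) * l i - l₀ * ∑ i, b (π i) - β * ∑ i, (l i - l₀) := by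
      simp only [Finset.mul_sum, ← Finset.sum_sub_distrib]
      exact Finset.sum_congr rfl fun i _ => by ring
    rw [this, Equiv.sum_comp π b, hc]
    ring
  have hmain := sum_perm_sq_le (fun i => b i - β) (fun i => l i - l₀) hsum habs
    (by simpa using hn)
  rw [Fintype.card_fin] at hmain
  have hfac : (0 : ℝ) < n.factorial := by exact_mod_cast n.factorial_pos
  simp only [permE, hcentre, mul_pow, ← Finset.mul_sum]
  rw [div_le_iff₀ hfac]
  calc s ^ 2 * _ ≤ s ^ 2 * _ := mul_le_mul_of_nonneg_left hmain (sq_nonneg s)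
    _ = _ := by ring

/-! ### The weights `b̄` -/

lemma kbar_nonneg {K : ℝ → ℝ} (hK : ∀ x, 0 ≤ K x) (x : ℝ) : 0 ≤ kbar K x :=
  integral_nonneg hK

lemma kbar_le_one {K : ℝ → ℝ} (hK : ∀ x, 0 ≤ K x) (hKi : Integrable K) (hKint : ∫ x, K x = 1)
    (x : ℝ) : kbar K x ≤ 1 :=
  (setIntegral_le_integral hKi (ae_of_all _ hK)).trans_eq hKint

lemma BCoef_nonneg {K : ℝ → ℝ} (hK : ∀ x, 0 ≤ K x) (n : ℕ) (h : ℝ) (i j : ℕ) :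
    0 ≤ BCoef K n h i j :=
  intervalIntegral.integral_nonneg zero_le_one fun _ _ =>
    mul_nonneg (kbar_nonneg hK _) (kbar_nonneg hK _)

lemma BCoef_le_one {K : ℝ → ℝ} (hK : ∀ x, 0 ≤ K x) (hKi : Integrable K) (hKint : ∫ x, K x = 1)
    (n : ℕ) (h : ℝ) (i j : ℕ) : BCoef K n h i j ≤ 1 := by
  have hbound := intervalIntegral.norm_integral_le_of_norm_le_const (a := 0) (b := 1) (C := 1)
    (f := fun v : ℝ => kbar K ((v - i / n) / h) * kbar K ((v - j / n) / h)) fun v _ => by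
      rw [Real.norm_of_nonneg (mul_nonneg (kbar_nonneg hK _) (kbar_nonneg hK _))]
      exact mul_le_one₀ (kbar_le_one hK hKi hKint _) (kbar_nonneg hK _)
        (kbar_le_one hK hKi hKint _)
  simpa [BCoef] using (le_abs_self _).trans hbound

lemma bbar_nonneg {K : ℝ → ℝ} (hK : ∀ x, 0 ≤ K x) {n : ℕ} (hn : 1 ≤ n) (h : ℝ) (i : ℕ) :
    0 ≤ bbar K n h i := by
  have hn' : (1 : ℝ) ≤ n := by exact_mod_cast hn
  refine mul_nonneg (one_div_nonneg.mpr (by linarith)) (Finset.sum_nonneg fun k _ => ?_)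
  split_ifs
  exacts [BCoef_nonneg hK _ _ _ _, le_rfl]

lemma bbar_le_one {K : ℝ → ℝ} (hK : ∀ x, 0 ≤ K x) (hKi : Integrable K) (hKint : ∫ x, K x = 1)
    {n : ℕ} (hn : 2 ≤ n) (h : ℝ) {i : ℕ} (hi : i ∈ Finset.Icc 1 n) : bbar K n h i ≤ 1 := by
  have hn' : (2 : ℝ) ≤ n := by exact_mod_cast hn
  rw [bbar, one_div, inv_mul_le_one₀ (by linarith), ← Finset.sum_filter, Finset.filter_ne']
  calc ∑ k ∈ (Finset.Icc 1 n).erase i, BCoef K n h i k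
      ≤ ∑ _k ∈ (Finset.Icc 1 n).erase i, (1 : ℝ) :=
        Finset.sum_le_sum fun k _ => BCoef_le_one hK hKi hKint _ _ _ _
    _ = (n : ℝ) - 1 := by
        rw [Finset.sum_const, Finset.card_erase_of_mem hi, Nat.card_Icc, nsmul_eq_mul,
          Nat.add_sub_cancel, Nat.cast_sub (by omega), Nat.cast_one, mul_one]

/-! ### The coefficients `a` and their row sums -/

/-- The autocorrelation `d ↦ ∫ K(w) K(w + d) dw` of the kernel. -/
noncomputable def autocorr (K : ℝ → ℝ) (d : ℝ) : ℝ := ∫ w, K w * K (w + d)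

lemma autocorr_nonneg {K : ℝ → ℝ} (hK : ∀ x, 0 ≤ K x) (d : ℝ) : 0 ≤ autocorr K d :=
  integral_nonneg fun _ => mul_nonneg (hK _) (hK _)

lemma autocorr_le {K : ℝ → ℝ} (hK : ∀ x, 0 ≤ K x) (hKi : Integrable K) (hKint : ∫ x, K x = 1)
    {M : ℝ} (hM : ∀ x, K x ≤ M) (d : ℝ) : autocorr K d ≤ M := by
  calc autocorr K d ≤ ∫ w, K w * M :=
        integral_mono_of_nonneg (ae_of_all _ fun _ => mul_nonneg (hK _) (hK _))
          (hKi.mul_const M) (ae_of_all _ fun w => mul_le_mul_of_nonneg_left (hM _) (hK w))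
    _ = M := by rw [integral_mul_const, hKint, one_mul]

lemma integral_kernel_mul_kernel (K : ℝ → ℝ) {h : ℝ} (hh : 0 < h) (x y : ℝ) :
    ∫ u, K ((u - x) / h) * K ((u - y) / h) = h * autocorr K ((x - y) / h) := by
  have hrw : ∀ u : ℝ, K ((u - x) / h) * K ((u - y) / h)
      = (fun w => K (w / h) * K (w / h + (x - y) / h)) (u - x) := fun u => by
    have : (u - y) / h = (u - x) / h + (x - y) / h := by ring
    simp only [this]
  simp only [hrw]
  rw [integral_sub_right_eq_self (fun w => K (w / h) * K (w / h + (x - y) / h)) x,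
    Measure.integral_comp_div (fun w => K w * K (w + (x - y) / h)), abs_of_pos hh, smul_eq_mul,
    autocorr]

lemma aCoef_nonneg {K : ℝ → ℝ} (hK : ∀ x, 0 ≤ K x) (n : ℕ) {h : ℝ} (hh : 0 < h) (i j : ℕ) :
    0 ≤ aCoef K n h i j :=
  mul_nonneg (by positivity)
    (intervalIntegral.integral_nonneg zero_le_one fun _ _ => mul_nonneg (hK _) (hK _))

lemma aCoef_le {K : ℝ → ℝ} (hKc : Continuous K) (hK : ∀ x, 0 ≤ K x) (hKi : Integrable K)
    (hKint : ∫ x, K x = 1) {M : ℝ} (hM : ∀ x, K x ≤ M) (n : ℕ) {h : ℝ} (hh : 0 < h) (i j : ℕ) :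
    aCoef K n h i j ≤ M := by
  have hint : Integrable fun u : ℝ => K ((u - i / n) / h) * K ((u - j / n) / h) :=
    ((hKi.comp_div hh.ne').comp_sub_right ((j : ℝ) / n)).bdd_mul (c := M)
      (by fun_prop) (ae_of_all _ fun u => by rw [Real.norm_of_nonneg (hK _)]; exact hM _)
  rw [aCoef, intervalIntegral.integral_of_le zero_le_one, one_div, inv_mul_le_iff₀ hh]
  refine (setIntegral_le_integral hint
    (ae_of_all _ fun _ => mul_nonneg (hK _) (hK _))).trans ?_
  rw [integral_kernel_mul_kernel K hh]
  exact mul_le_mul_of_nonneg_left (autocorr_le hK hKi hKint hM _) hh.le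

lemma aCoef_eq_zero {K : ℝ → ℝ} (hKsupp : ∀ x, x ∉ Set.Icc (-1 : ℝ) 1 → K x = 0) {n : ℕ}
    (hn : 0 < n) {h : ℝ} (hh : 0 < h) {i j : ℕ} (hij : 2 * (n * h) < |(i : ℝ) - j|) :
    aCoef K n h i j = 0 := by
  have hn' : (0 : ℝ) < n := by exact_mod_cast hn
  have hzero : ∀ u : ℝ, K ((u - i / n) / h) * K ((u - j / n) / h) = 0 := by
    intro u
    by_contra hne
    have hi : (u - i / n) / h ∈ Set.Icc (-1 : ℝ) 1 := by
      by_contra hnot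
      exact hne (by rw [hKsupp _ hnot, zero_mul])
    have hj : (u - j / n) / h ∈ Set.Icc (-1 : ℝ) 1 := by
      by_contra hnot
      exact hne (by rw [hKsupp _ hnot, mul_zero])
    have hdiff : (i : ℝ) - j = n * h * ((u - j / n) / h - (u - i / n) / h) := by
      field_simp
      ring
    have habs : |(u - j / n) / h - (u - i / n) / h| ≤ 2 := by
      rw [abs_le]
      constructor <;> linarith [hi.1, hi.2, hj.1, hj.2]
    rw [hdiff, abs_mul, abs_of_pos (mul_pos hn' hh)] at hij
    nlinarith [mul_pos hn' hh]
  simp [aCoef, hzero]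

lemma aCoef_eq_autocorr {K : ℝ → ℝ} (hKsupp : ∀ x, x ∉ Set.Icc (-1 : ℝ) 1 → K x = 0) {n : ℕ}
    (hn : 0 < n) {h : ℝ} (hh : 0 < h) {i : ℕ} (j : ℕ) (hi0 : n * h < i) (hi1 : i + n * h ≤ n) :
    aCoef K n h i j = autocorr K (((i : ℝ) - j) / (n * h)) := by
  have hn' : (0 : ℝ) < n := by exact_mod_cast hn
  have hzero : ∀ u : ℝ, u ∉ Set.Ioc (0 : ℝ) 1 →
      K ((u - i / n) / h) * K ((u - j / n) / h) = 0 := by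
    intro u hu
    rw [hKsupp, zero_mul]
    rintro ⟨hl, hr⟩
    rw [le_div_iff₀ hh] at hl
    rw [div_le_iff₀ hh] at hr
    have hlo : h < i / n := by rw [lt_div_iff₀ hn']; linarith
    have hhi : (i : ℝ) / n ≤ 1 - h := by rw [div_le_iff₀ hn']; linarith
    exact hu ⟨by linarith, by linarith⟩
  rw [aCoef, intervalIntegral.integral_of_le zero_le_one,
    setIntegral_eq_integral_of_forall_compl_eq_zero hzero, integral_kernel_mul_kernel K hh,
    ← sub_div, div_div]
  field_simp

lemma LL_nonneg {K : ℝ → ℝ} (hK : ∀ x, 0 ≤ K x) (n : ℕ) {h : ℝ} (hh : 0 < h) (i : ℕ) :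
    0 ≤ LL K n h i := by
  refine Finset.sum_nonneg fun j _ => ?_
  split_ifs
  exacts [aCoef_nonneg hK _ hh _ _, le_rfl]

lemma two_mul_lt_abs_sub {x : ℝ} {N i j : ℕ} (hN : 2 * x ≤ N)
    (hij : j ∉ Finset.Icc (i - N) (i + N)) : 2 * x < |(i : ℝ) - j| := by
  rw [Finset.mem_Icc, not_and_or, not_le, not_le] at hij
  rw [lt_abs]
  rcases hij with hij | hij
  · left
    have : ((j + N : ℕ) : ℝ) < i := by exact_mod_cast (by omega : j + N < i)
    push_cast at this
    linarith
  · right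
    have : ((i + N : ℕ) : ℝ) < j := by exact_mod_cast hij
    push_cast at this
    linarith

lemma LL_le {K : ℝ → ℝ} (hKc : Continuous K) (hK : ∀ x, 0 ≤ K x) (hKi : Integrable K)
    (hKint : ∫ x, K x = 1) (hKsupp : ∀ x, x ∉ Set.Icc (-1 : ℝ) 1 → K x = 0) {M : ℝ}
    (hM : ∀ x, K x ≤ M) {n : ℕ} (hn : 0 < n) {h : ℝ} (hh : 0 < h) {N : ℕ}
    (hN : 2 * (n * h) ≤ N) (i : ℕ) : LL K n h i ≤ (2 * N + 1) * M := by
  have hM0 : 0 ≤ M := (hK 0).trans (hM 0)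
  calc LL K n h i
      ≤ ∑ j ∈ Finset.Icc 1 n, if j ∈ Finset.Icc (i - N) (i + N) then M else 0 := by
        refine Finset.sum_le_sum fun j _ => ?_
        by_cases hj : j ∈ Finset.Icc (i - N) (i + N)
        · rw [if_pos hj]
          split_ifs
          exacts [aCoef_le hKc hK hKi hKint hM n hh i j, hM0]
        · rw [if_neg hj, aCoef_eq_zero hKsupp hn hh (two_mul_lt_abs_sub hN hj), ite_self]
    _ = (Finset.Icc 1 n ∩ Finset.Icc (i - N) (i + N)).card * M := by
        rw [Finset.sum_ite_mem, Finset.sum_const, nsmul_eq_mul]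
    _ ≤ (2 * N + 1) * M := by
        refine mul_le_mul_of_nonneg_right ?_ hM0
        have hcard : (Finset.Icc 1 n ∩ Finset.Icc (i - N) (i + N)).card ≤ 2 * N + 1 := by
          refine (Finset.card_le_card Finset.inter_subset_right).trans ?_
          rw [Nat.card_Icc]
          omega
        exact_mod_cast hcard

/-- The common value of `L_i` over all interior indices `i`. -/
noncomputable def interiorLL (K : ℝ → ℝ) (n : ℕ) (h : ℝ) (N : ℕ) : ℝ :=
  ∑ k ∈ Finset.range (2 * N + 1), if k ≠ N then autocorr K (((N : ℝ) - k) / (n * h)) else 0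

lemma interiorLL_nonneg {K : ℝ → ℝ} (hK : ∀ x, 0 ≤ K x) (n : ℕ) (h : ℝ) (N : ℕ) :
    0 ≤ interiorLL K n h N := by
  refine Finset.sum_nonneg fun k _ => ?_
  split_ifs
  exacts [autocorr_nonneg hK _, le_rfl]

lemma interiorLL_le {K : ℝ → ℝ} (hK : ∀ x, 0 ≤ K x) (hKi : Integrable K)
    (hKint : ∫ x, K x = 1) {M : ℝ} (hM : ∀ x, K x ≤ M) (n : ℕ) (h : ℝ) (N : ℕ) :
    interiorLL K n h N ≤ (2 * N + 1) * M := by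
  calc interiorLL K n h N ≤ ∑ _k ∈ Finset.range (2 * N + 1), M := by
        refine Finset.sum_le_sum fun k _ => ?_
        split_ifs
        exacts [autocorr_le hK hKi hKint hM _, (hK 0).trans (hM 0)]
    _ = (2 * N + 1) * M := by simp

lemma LL_eq_interiorLL {K : ℝ → ℝ} (hKsupp : ∀ x, x ∉ Set.Icc (-1 : ℝ) 1 → K x = 0) {n : ℕ}
    (hn : 0 < n) {h : ℝ} (hh : 0 < h) {N : ℕ} (hN : 2 * (n * h) ≤ N) {i : ℕ} (hi0 : N < i)
    (hi1 : i + N ≤ n) : LL K n h i = interiorLL K n h N := by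
  have hnh : 0 < (n : ℝ) * h := mul_pos (by exact_mod_cast hn) hh
  have hi0' : (N : ℝ) < i := by exact_mod_cast hi0
  have hi1' : (i : ℝ) + N ≤ n := by exact_mod_cast hi1
  have hsub : Finset.Ico (i - N) (i + N + 1) ⊆ Finset.Icc 1 n := by
    intro j hj
    rw [Finset.mem_Ico] at hj
    rw [Finset.mem_Icc]
    omega
  rw [LL, ← Finset.sum_subset hsub, Finset.sum_Ico_eq_sum_range, interiorLL,
    show i + N + 1 - (i - N) = 2 * N + 1 by omega]
  · refine Finset.sum_congr rfl fun k _ => ?_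
    refine if_congr (by omega) ?_ rfl
    rw [aCoef_eq_autocorr hKsupp hn hh _ (by linarith) (by linarith), Nat.cast_add,
      Nat.cast_sub hi0.le]
    congr 2
    ring
  · intro j _ hj
    rw [aCoef_eq_zero hKsupp hn hh (two_mul_lt_abs_sub hN _), ite_self]
    rw [Finset.mem_Icc]
    rw [Finset.mem_Ico] at hj
    omega

/-- Only the boundary indices contribute to the dispersion of `L_i`. -/
lemma sum_LL_sub_interiorLL_sq_le {K : ℝ → ℝ} (hKc : Continuous K) (hK : ∀ x, 0 ≤ K x)
    (hKi : Integrable K) (hKint : ∫ x, K x = 1)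
    (hKsupp : ∀ x, x ∉ Set.Icc (-1 : ℝ) 1 → K x = 0) {M : ℝ} (hM : ∀ x, K x ≤ M) {n : ℕ}
    (hn : 0 < n) {h : ℝ} (hh : 0 < h) {N : ℕ} (hN : 2 * (n * h) ≤ N) :
    ∑ i : Fin n, (LL K n h ((i : ℕ) + 1) - interiorLL K n h N) ^ 2
      ≤ 2 * N * ((2 * N + 1) * M) ^ 2 := by
  set D : ℝ := (2 * N + 1) * M with hD
  have hterm : ∀ i ∈ Finset.range n, (LL K n h (i + 1) - interiorLL K n h N) ^ 2
      ≤ if i ∈ Finset.range N ∪ Finset.Ico (n - N) n then D ^ 2 else 0 := by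
    intro i hin
    rw [Finset.mem_range] at hin
    split_ifs with hi
    · refine sq_le_sq' ?_ ?_
      · linarith [LL_nonneg hK n hh (i + 1), interiorLL_le hK hKi hKint hM n h N]
      · linarith [LL_le hKc hK hKi hKint hKsupp hM hn hh hN (i + 1), interiorLL_nonneg hK n h N]
    · rw [Finset.mem_union, Finset.mem_range, Finset.mem_Ico] at hi
      rw [LL_eq_interiorLL hKsupp hn hh hN (by omega) (by omega), sub_self, zero_pow two_ne_zero]
  rw [Fin.sum_univ_eq_sum_range
    (fun i => (LL K n h (i + 1) - interiorLL K n h N) ^ 2) n]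
  calc ∑ i ∈ Finset.range n, (LL K n h (i + 1) - interiorLL K n h N) ^ 2
      ≤ ∑ i ∈ Finset.range n,
          if i ∈ Finset.range N ∪ Finset.Ico (n - N) n then D ^ 2 else 0 :=
        Finset.sum_le_sum hterm
    _ = (Finset.range n ∩ (Finset.range N ∪ Finset.Ico (n - N) n)).card * D ^ 2 := by
        rw [Finset.sum_ite_mem, Finset.sum_const, nsmul_eq_mul]
    _ ≤ 2 * N * D ^ 2 := by
        refine mul_le_mul_of_nonneg_right ?_ (sq_nonneg D)
        have hcard : (Finset.range n ∩ (Finset.range N ∪ Finset.Ico (n - N) n)).card ≤ 2 * N := by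
          refine (Finset.card_le_card Finset.inter_subset_right).trans
            ((Finset.card_union_le _ _).trans ?_)
          rw [Finset.card_range, Nat.card_Ico]
          omega
        exact_mod_cast hcard

lemma exists_forall_le_of_support_subset_Icc {K : ℝ → ℝ} (hKc : Continuous K)
    (hKsupp : ∀ x, x ∉ Set.Icc (-1 : ℝ) 1 → K x = 0) : ∃ M, ∀ x, K x ≤ M := by
  obtain ⟨M, hM⟩ := isCompact_Icc.exists_bound_of_continuousOn (s := Set.Icc (-1 : ℝ) 1)
    hKc.continuousOn
  refine ⟨max M 0, fun x => ?_⟩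
  by_cases hx : x ∈ Set.Icc (-1 : ℝ) 1
  · exact ((le_abs_self _).trans (hM x hx)).trans (le_max_left _ _)
  · rw [hKsupp x hx]
    exact le_max_right _ _

/-- for `Tₙ = (1/(n²h₁)) ∑ᵢ b̄_{π(i)} Lᵢ` with a uniform random permutation `π`,
`Var(Tₙ) ≤ c h₁/n` for all sufficiently large `n`, where `c > 0` depends only on `K`. -/
theorem stmt9 (K : ℝ → ℝ)
    (hKcont : Continuous K) (hKsymm : ∀ x, K (-x) = K x)
    (hKnonneg : ∀ x, 0 ≤ K x) (hKint : ∫ x, K x = 1)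
    (hKsupp : ∀ x, x ∉ Set.Icc (-1 : ℝ) 1 → K x = 0)
    (h₁ h₂ : ℕ → ℝ) (hh₁pos : ∀ n, 0 < h₁ n) (hh₂pos : ∀ n, 0 < h₂ n)
    (hh₁0 : Tendsto h₁ atTop (nhds 0)) (hh₂0 : Tendsto h₂ atTop (nhds 0))
    (hnh₁ : Tendsto (fun n : ℕ => (n : ℝ) * h₁ n) atTop atTop)
    (hh₂le : ∀ n, h₂ n ≤ 1)
    (T : ∀ n : ℕ, Equiv.Perm (Fin n) → ℝ)
    (hT : ∀ n π, T n π = (1 / ((n : ℝ) ^ 2 * h₁ n)) *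
      ∑ i : Fin n, bbar K n (h₂ n) ((π i : ℕ) + 1) * LL K n (h₁ n) ((i : ℕ) + 1)) :
    ∃ c > 0, ∀ᶠ n : ℕ in atTop,
      permE n (fun π => (T n π) ^ 2) - (permE n (T n)) ^ 2 ≤ c * h₁ n / n := by
  obtain ⟨M, hM⟩ := exists_forall_le_of_support_subset_Icc hKcont hKsupp
  have hKi : Integrable K := Integrable.of_integral_ne_zero (by rw [hKint]; exact one_ne_zero)
  refine ⟨972 * M ^ 2 + 1, by positivity, ?_⟩
  filter_upwards [hnh₁.eventually_ge_atTop 1, eventually_ge_atTop 2] with n hnh hn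
  have hn0 : 0 < n := by omega
  have hn' : (0 : ℝ) < n := by exact_mod_cast hn0
  have hh := hh₁pos n
  set h := h₁ n with hdef
  set N := ⌈2 * ((n : ℝ) * h)⌉₊ with hNdef
  have hN : 2 * ((n : ℝ) * h) ≤ N := Nat.le_ceil _
  have hN3 : (N : ℝ) ≤ 3 * (n * h) := by
    have := Nat.ceil_lt_add_one (a := 2 * ((n : ℝ) * h)) (by positivity)
    linarith
  have hvar := permE_variance_le hn (fun i : Fin n => bbar K n (h₂ n) ((i : ℕ) + 1))
    (fun i : Fin n => LL K n h ((i : ℕ) + 1)) (fun i => bbar_nonneg hKnonneg hn0 _ _)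
    (fun i => bbar_le_one hKnonneg hKi hKint hn _
      (Finset.mem_Icc.mpr ⟨by omega, by have := i.isLt; omega⟩))
    (1 / ((n : ℝ) ^ 2 * h)) (interiorLL K n h N)
  have hS := sum_LL_sub_interiorLL_sq_le hKcont hKnonneg hKi hKint hKsupp hM hn0 hh hN
  rw [show T n = _ from funext (hT n)]
  refine hvar.trans ?_
  have hS' : 2 * N * ((2 * N + 1) * M) ^ 2 ≤ 486 * M ^ 2 * (n * h) ^ 3 := by
    have hN1 : (1 : ℝ) ≤ N := by linarith
    calc 2 * N * ((2 * N + 1) * M) ^ 2 = 2 * N * (2 * N + 1) ^ 2 * M ^ 2 := by ring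
      _ ≤ 2 * N * (3 * N) ^ 2 * M ^ 2 := by gcongr; linarith
      _ = 18 * N ^ 3 * M ^ 2 := by ring
      _ ≤ 18 * (3 * (n * h)) ^ 3 * M ^ 2 := by gcongr
      _ = _ := by ring
  calc 2 * (1 / ((n : ℝ) ^ 2 * h)) ^ 2
        * ∑ i : Fin n, (LL K n h ((i : ℕ) + 1) - interiorLL K n h N) ^ 2
      ≤ 2 * (1 / ((n : ℝ) ^ 2 * h)) ^ 2 * (486 * M ^ 2 * (n * h) ^ 3) := by
        gcongr
        exact hS.trans hS'
    _ = 972 * M ^ 2 * h / n := by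
        field_simp
        ring
    _ ≤ (972 * M ^ 2 + 1) * h / n := by
        gcongr
        linarith
end

section
/- Let π = πₙ be a uniformly distributed random permutation of {1,…,n} and define b_{n0} = (1/(n²h₁)) Σ_{i=1}^n a_{ii} B_{π(i)π(i)}. Then E[b_{n0}] = (1/(n²h₁²)) (Σ_{i=1}^n ∫₀¹ K²((u − i/n)/h₁) du) ((1/n) Σ_{i=1}^n ∫₀¹ K̄²((v − i/n)/h₂) dv), and there exists a constant c > 0 depending only on K such that Var(b_{n0}) ≤ c/(n³h₁²) for all n ≥ 2 and all h₁, h₂ ∈ (0,1). -/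
open Finset MeasureTheory Filter ProbabilityTheory

namespace Equiv.Perm

variable {ι : Type*} [Fintype ι] [DecidableEq ι]

/-- The law of the image of a point under a uniform permutation does not depend on the point. -/
lemma sum_apply_eq (g : ι → ℝ) (i j : ι) :
    ∑ π : Equiv.Perm ι, g (π i) = ∑ π : Equiv.Perm ι, g (π j) := by
  rw [← Equiv.sum_comp (Equiv.mulRight (Equiv.swap i j)) (fun π => g (π i))]
  simp [Equiv.Perm.mul_apply]

/-- The law of the images of two distinct points under a uniform permutation does not depend on
the points. -/
lemma sum_apply_apply_eq (g : ι → ι → ℝ) {i j k l : ι} (hij : i ≠ j) (hkl : k ≠ l) :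
    ∑ π : Equiv.Perm ι, g (π i) (π j) = ∑ π : Equiv.Perm ι, g (π k) (π l) := by
  obtain ⟨σ, hσi, hσj⟩ := (MulAction.is_two_pretransitive_iff (G := Equiv.Perm ι) (α := ι)).mp
    (Equiv.Perm.isMultiplyPretransitive ι 2) hij hkl
  rw [← Equiv.sum_comp (Equiv.mulRight σ) (fun π => g (π i) (π j))]
  simp only [Equiv.Perm.smul_def] at hσi hσj
  simp [Equiv.Perm.mul_apply, hσi, hσj]

lemma card_mul_sum_apply (g : ι → ℝ) (i : ι) :
    (Fintype.card ι : ℝ) * ∑ π : Equiv.Perm ι, g (π i) =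
      (Fintype.card ι).factorial * ∑ j, g j := by
  have h : ∑ j, ∑ π : Equiv.Perm ι, g (π j) = Fintype.card ι * ∑ π : Equiv.Perm ι, g (π i) := by
    rw [Finset.sum_congr rfl fun j _ => sum_apply_eq g j i]
    simp
  rw [← h, Finset.sum_comm]
  simp [Equiv.sum_comp, Fintype.card_perm]

/-- Second moment bound for the linear permutation statistic with centred scores. -/
lemma sum_sq_linear_le (a b : ι → ℝ) (hb : ∑ i, b i = 0) (hcard : 2 ≤ Fintype.card ι) {q : ℝ}
    (hq : ∀ i, b i ^ 2 ≤ q) :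
    ∑ π : Equiv.Perm ι, (∑ i, a i * b (π i)) ^ 2 ≤
      (Fintype.card ι).factorial * (2 * q * ∑ i, a i ^ 2) := by
  obtain ⟨k, l, hkl⟩ := Fintype.one_lt_card_iff.mp (show 1 < Fintype.card ι by lia)
  set Q := ∑ π : Equiv.Perm ι, b (π k) * b (π k) with hQ
  set R := ∑ π : Equiv.Perm ι, b (π k) * b (π l) with hR
  have hmom (i j : ι) :
      ∑ π : Equiv.Perm ι, b (π i) * b (π j) = R + if i = j then Q - R else 0 := by
    split_ifs with h
    · subst h
      rw [hQ, sum_apply_eq (fun x => b x * b x) i k]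
      ring
    · rw [hR, sum_apply_apply_eq (fun x y => b x * b y) h hkl]
      ring
  have hrow : Fintype.card ι * R + (Q - R) = 0 := by
    have h0 : ∑ j, ∑ π : Equiv.Perm ι, b (π k) * b (π j) = 0 := by
      rw [Finset.sum_comm]
      refine Finset.sum_eq_zero fun π _ => ?_
      rw [← Finset.mul_sum, Equiv.sum_comp π b, hb, mul_zero]
    rw [Finset.sum_congr rfl fun j _ => hmom k j, Finset.sum_add_distrib] at h0
    simpa using h0
  have hexp : ∑ π : Equiv.Perm ι, (∑ i, a i * b (π i)) ^ 2 =
      R * (∑ i, a i) ^ 2 + (Q - R) * ∑ i, a i ^ 2 := by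
    calc ∑ π : Equiv.Perm ι, (∑ i, a i * b (π i)) ^ 2
        = ∑ i, ∑ j, a i * a j * ∑ π : Equiv.Perm ι, b (π i) * b (π j) := by
          simp_rw [sq, Finset.sum_mul_sum]
          rw [Finset.sum_comm]
          refine Finset.sum_congr rfl fun i _ => ?_
          rw [Finset.sum_comm]
          refine Finset.sum_congr rfl fun j _ => ?_
          rw [Finset.mul_sum]
          exact Finset.sum_congr rfl fun π _ => by ring
      _ = _ := by
          simp_rw [hmom, mul_add, Finset.sum_add_distrib, ← Finset.sum_mul, mul_ite, mul_zero,
            Finset.sum_ite_eq, Finset.mem_univ, if_true, ← Finset.sum_mul, ← Finset.sum_mul_sum]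
          simp_rw [sq]
          ring
  have hQ0 : 0 ≤ Q := Finset.sum_nonneg fun π _ => mul_self_nonneg _
  have hQle : Q ≤ (Fintype.card ι).factorial * q := by
    calc Q ≤ ∑ _π : Equiv.Perm ι, q :=
          Finset.sum_le_sum fun π _ => by simpa [sq] using hq (π k)
      _ = _ := by simp [Fintype.card_perm]
  have hc : (2 : ℝ) ≤ Fintype.card ι := by exact_mod_cast hcard
  have hR0 : R ≤ 0 := by nlinarith
  have hRQ : Q - R ≤ 2 * Q := by nlinarith
  have ha : 0 ≤ ∑ i, a i ^ 2 := Finset.sum_nonneg fun i _ => sq_nonneg _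
  rw [hexp]
  nlinarith [mul_nonneg (neg_nonneg.mpr hR0) (sq_nonneg (∑ i, a i)),
    mul_le_mul_of_nonneg_right hRQ ha, mul_le_mul_of_nonneg_right hQle ha]

end Equiv.Perm

lemma permE_linear (n : ℕ) (κ : ℝ) (a b : Fin n → ℝ) :
    permE n (fun π => κ * ∑ i, a i * b (π i)) = κ * (∑ i, a i) * ((1 / n) * ∑ i, b i) := by
  rcases Nat.eq_zero_or_pos n with rfl | hn
  · simp [permE]
  have hn' : (n : ℝ) ≠ 0 := by positivity
  have hf : (n.factorial : ℝ) ≠ 0 := by positivity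
  have h (i : Fin n) : ∑ π : Equiv.Perm (Fin n), b (π i) = n.factorial * ∑ j, b j / n := by
    have := Equiv.Perm.card_mul_sum_apply b i
    rw [Fintype.card_fin] at this
    rw [← Finset.sum_div]
    field_simp
    linarith
  rw [permE, ← Finset.mul_sum, Finset.sum_comm]
  simp_rw [← Finset.mul_sum, h, ← Finset.sum_mul, ← Finset.sum_div]
  field_simp

/-- The variance is at most the mean square deviation from any point. -/
lemma permE_variance_le_s14 (n : ℕ) (f : Equiv.Perm (Fin n) → ℝ) (t : ℝ) :
    permE n (fun π => f π ^ 2) - permE n f ^ 2 ≤ permE n (fun π => (f π - t) ^ 2) := by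
  have hf : (n.factorial : ℝ) ≠ 0 := by positivity
  have h : permE n (fun π => (f π - t) ^ 2) =
      permE n (fun π => f π ^ 2) - 2 * t * permE n f + t ^ 2 := by
    simp only [permE, sub_sq, Finset.sum_add_distrib, Finset.sum_sub_distrib,
      ← Finset.sum_mul, ← Finset.mul_sum, Finset.sum_const, Finset.card_univ,
      Fintype.card_perm, Fintype.card_fin, nsmul_eq_mul]
    field_simp
  nlinarith [sq_nonneg (permE n f - t)]

lemma permE_variance_linear_le (n : ℕ) (hn : 2 ≤ n) (κ A : ℝ) (a b : Fin n → ℝ)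
    (ha : ∀ i, |a i| ≤ A) (hb : ∀ i, |b i| ≤ 1) :
    permE n (fun π => (κ * ∑ i, a i * b (π i)) ^ 2) -
      permE n (fun π => κ * ∑ i, a i * b (π i)) ^ 2 ≤ κ ^ 2 * (8 * n * A ^ 2) := by
  set m : ℝ := (∑ i, b i) / n with hm
  have hn0 : (0 : ℝ) < n := by positivity
  have hsum : ∑ i, (b i - m) = 0 := by
    rw [Finset.sum_sub_distrib]
    simp [hm]
    field_simp
    simp
  have hm1 : |m| ≤ 1 := by
    rw [hm, abs_div, Nat.abs_cast, div_le_one hn0]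
    calc |∑ i, b i| ≤ ∑ i, |b i| := Finset.abs_sum_le_sum_abs _ _
      _ ≤ ∑ _i : Fin n, 1 := Finset.sum_le_sum fun i _ => hb i
      _ = n := by simp
  have hq (i : Fin n) : (b i - m) ^ 2 ≤ 4 := by
    have h1 := abs_le.mp (hb i)
    have h2 := abs_le.mp hm1
    nlinarith
  have hsq := Equiv.Perm.sum_sq_linear_le a (fun i => b i - m) hsum (by simpa using hn) hq
  have ha2 : ∑ i, a i ^ 2 ≤ n * A ^ 2 := by
    calc ∑ i, a i ^ 2 ≤ ∑ _i : Fin n, A ^ 2 :=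
          Finset.sum_le_sum fun i _ => sq_le_sq' (abs_le.mp (ha i)).1 (abs_le.mp (ha i)).2
      _ = n * A ^ 2 := by simp
  refine (permE_variance_le_s14 n _ (κ * ((∑ i, a i) * m))).trans ?_
  have hcentre (π : Equiv.Perm (Fin n)) :
      (κ * ∑ i, a i * b (π i) - κ * ((∑ i, a i) * m)) ^ 2 =
        κ ^ 2 * (∑ i, a i * (b (π i) - m)) ^ 2 := by
    simp_rw [mul_sub, Finset.sum_sub_distrib, Finset.sum_mul]
    ring
  have hf : (0 : ℝ) < n.factorial := by positivity
  rw [Fintype.card_fin] at hsq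
  simp_rw [permE, hcentre, ← Finset.mul_sum]
  rw [mul_div_assoc]
  refine mul_le_mul_of_nonneg_left ?_ (sq_nonneg κ)
  rw [div_le_iff₀ hf]
  nlinarith

lemma abs_kbar_le_one {K : ℝ → ℝ} (hK : ∀ x, 0 ≤ K x) (hKi : Integrable K)
    (hK1 : ∫ x, K x = 1) (x : ℝ) : |kbar K x| ≤ 1 := by
  rw [kbar, abs_of_nonneg (integral_nonneg hK), ← hK1]
  exact setIntegral_le_integral hKi (Eventually.of_forall hK)

lemma abs_BCoef_le_one {K : ℝ → ℝ} (hK : ∀ x, 0 ≤ K x) (hKi : Integrable K)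
    (hK1 : ∫ x, K x = 1) (n : ℕ) (h : ℝ) (i j : ℕ) : |BCoef K n h i j| ≤ 1 := by
  have := intervalIntegral.norm_integral_le_of_norm_le_const (a := 0) (b := 1) (C := 1)
    (f := fun v : ℝ => kbar K ((v - i / n) / h) * kbar K ((v - j / n) / h)) fun v _ => by
      rw [norm_mul]
      exact mul_le_one₀ (abs_kbar_le_one hK hKi hK1 _) (norm_nonneg _)
        (abs_kbar_le_one hK hKi hK1 _)
  simpa [BCoef] using this

lemma abs_aCoef_self_le {K : ℝ → ℝ} (hKi : Integrable fun x => K x * K x) (n : ℕ) {h : ℝ}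
    (hh : 0 < h) (i : ℕ) : |aCoef K n h i i| ≤ ∫ x, K x * K x := by
  have hle : ∫ u in (0:ℝ)..1, K ((u - i / n) / h) * K ((u - i / n) / h) ≤
      h * ∫ x, K x * K x := by
    rw [intervalIntegral.integral_of_le zero_le_one]
    have hint : Integrable fun u : ℝ => K ((u - i / n) / h) * K ((u - i / n) / h) :=
      (hKi.comp_div hh.ne').comp_sub_right (i / n : ℝ)
    calc _ ≤ ∫ u : ℝ, K ((u - i / n) / h) * K ((u - i / n) / h) :=
          setIntegral_le_integral hint (Eventually.of_forall fun u => mul_self_nonneg _)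
      _ = ∫ u : ℝ, K (u / h) * K (u / h) :=
          integral_sub_right_eq_self (fun u : ℝ => K (u / h) * K (u / h)) (i / n : ℝ)
      _ = h * ∫ x, K x * K x := by
          rw [Measure.integral_comp_div (fun x : ℝ => K x * K x) h, abs_of_pos hh, smul_eq_mul]
  have hnn : 0 ≤ ∫ u in (0:ℝ)..1, K ((u - i / n) / h) * K ((u - i / n) / h) :=
    intervalIntegral.integral_nonneg zero_le_one fun u _ => mul_self_nonneg _
  rw [aCoef, abs_of_nonneg (by positivity), one_div, inv_mul_le_iff₀ hh]
  exact hle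

/-- for `b_{n0} = (1/(n²h₁)) ∑ᵢ a_{ii} B_{π(i)π(i)}` with a uniform random
permutation `π`, the expectation equals
`(1/(n²h₁²)) (∑ᵢ ∫₀¹ K²((u-i/n)/h₁) du)((1/n) ∑ᵢ ∫₀¹ K̄²((v-i/n)/h₂) dv)`, and
`Var(b_{n0}) ≤ c/(n³h₁²)` for all `n ≥ 2` and `h₁, h₂ ∈ (0,1)`, where `c > 0` depends
only on `K`. -/
theorem stmt14 (K : ℝ → ℝ)
    (hKcont : Continuous K) (hKsymm : ∀ x, K (-x) = K x)
    (hKnonneg : ∀ x, 0 ≤ K x) (hKint : ∫ x, K x = 1)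
    (hKsupp : ∀ x, x ∉ Set.Icc (-1 : ℝ) 1 → K x = 0)
    (b0 : ∀ n : ℕ, ℝ → ℝ → Equiv.Perm (Fin n) → ℝ)
    (hb0 : ∀ n h₁ h₂ π, b0 n h₁ h₂ π = (1 / ((n : ℝ) ^ 2 * h₁)) *
      ∑ i : Fin n, aCoef K n h₁ ((i : ℕ) + 1) ((i : ℕ) + 1) *
        BCoef K n h₂ ((π i : ℕ) + 1) ((π i : ℕ) + 1)) :
    (∀ n : ℕ, ∀ h₁ h₂ : ℝ, 0 < h₁ → 0 < h₂ →
      permE n (b0 n h₁ h₂) =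
        (1 / ((n : ℝ) ^ 2 * h₁ ^ 2)) *
          (∑ i ∈ Finset.Icc 1 n, ∫ u in (0:ℝ)..1, K ((u - i / n) / h₁) ^ 2) *
          ((1 / (n : ℝ)) * ∑ i ∈ Finset.Icc 1 n, ∫ v in (0:ℝ)..1, kbar K ((v - i / n) / h₂) ^ 2)) ∧
    (∃ c > 0, ∀ n : ℕ, 2 ≤ n → ∀ h₁ ∈ Set.Ioo (0:ℝ) 1, ∀ h₂ ∈ Set.Ioo (0:ℝ) 1,
      permE n (fun π => (b0 n h₁ h₂ π) ^ 2) - (permE n (b0 n h₁ h₂)) ^ 2 ≤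
        c / ((n : ℝ) ^ 3 * h₁ ^ 2)) := by
  have hfun (n : ℕ) (h₁ h₂ : ℝ) : b0 n h₁ h₂ = fun π => (1 / ((n : ℝ) ^ 2 * h₁)) *
      ∑ i : Fin n, aCoef K n h₁ ((i : ℕ) + 1) ((i : ℕ) + 1) *
        BCoef K n h₂ ((π i : ℕ) + 1) ((π i : ℕ) + 1) := funext (hb0 n h₁ h₂)
  refine ⟨fun n h₁ h₂ hh₁ _ => ?_, ?_⟩
  · have hIcc (g : ℕ → ℝ) : ∑ i ∈ Finset.Icc 1 n, g i = ∑ i : Fin n, g ((i : ℕ) + 1) := by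
      rw [Fin.sum_univ_eq_sum_range (fun i => g (i + 1)), Finset.range_eq_Ico,
        Finset.sum_Ico_add' g 0 n 1]
      rfl
    rw [hfun, permE_linear n _ (fun i : Fin n => aCoef K n h₁ ((i : ℕ) + 1) ((i : ℕ) + 1))
      (fun i : Fin n => BCoef K n h₂ ((i : ℕ) + 1) ((i : ℕ) + 1)), hIcc, hIcc]
    simp_rw [aCoef, BCoef, ← Finset.mul_sum, ← sq]
    congr 1
    field_simp
  · have hcs : HasCompactSupport K := HasCompactSupport.intro isCompact_Icc hKsupp
    have hKi : Integrable K := hKcont.integrable_of_hasCompactSupport hcs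
    have hKi2 : Integrable fun x => K x * K x :=
      (hKcont.mul hKcont).integrable_of_hasCompactSupport hcs.mul_left
    refine ⟨8 * (∫ x, K x * K x) ^ 2 + 1, by positivity, fun n hn h₁ hh₁ h₂ _ => ?_⟩
    have hn0 : (0 : ℝ) < n := by positivity
    have hh₁0 : 0 < h₁ := hh₁.1
    rw [hfun]
    refine (permE_variance_linear_le n hn _ (∫ x, K x * K x)
      (fun i : Fin n => aCoef K n h₁ ((i : ℕ) + 1) ((i : ℕ) + 1))
      (fun i : Fin n => BCoef K n h₂ ((i : ℕ) + 1) ((i : ℕ) + 1))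
      (fun i => abs_aCoef_self_le hKi2 n hh₁0 _)
      (fun i => abs_BCoef_le_one hKnonneg hKi hKint n h₂ _ _)).trans ?_
    calc (1 / ((n : ℝ) ^ 2 * h₁)) ^ 2 * (8 * n * (∫ x, K x * K x) ^ 2)
        = 8 * (∫ x, K x * K x) ^ 2 / ((n : ℝ) ^ 3 * h₁ ^ 2) := by field_simp
      _ ≤ _ := by gcongr; linarith
end

section
/- Let (U,V) be a random vector with values in [0,1]², with U and V each uniformly distributed on [0,1], joint distribution function C(u,v) = P(U ≤ u, V ≤ v), and suppose C is continuously differentiable in its first argument with τ(u,v) = ∂₁C(u,v). Define Z₁ = ∫₀¹ 1{V ≤ v} τ(U,v) dv. Then Var(Z₁) = ∫_{[0,1]³} τ(s, v∧w) τ(s,v) τ(s,w) ds dv dw − ( ∫_{[0,1]²} τ²(u,v) du dv )². -/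
open MeasureTheory Set

/-- A finite measure dominated by the uniform law on `[0,1]`, whose distribution function has
a continuous derivative `f` there, has density `f`. -/
theorem eq_withDensity_of_hasDerivWithinAt_cdf {ν : Measure ℝ} [IsFiniteMeasure ν] {f : ℝ → ℝ}
    (hν : ν ≪ volume.restrict (Icc (0 : ℝ) 1)) (hf : Continuous f)
    (hderiv : ∀ u ∈ Icc (0 : ℝ) 1,
      HasDerivWithinAt (fun u => ν.real (Iic u)) (f u) (Icc 0 1) u) :
    (∀ u ∈ Icc (0 : ℝ) 1, 0 ≤ f u) ∧
      ν = (volume.restrict (Icc (0 : ℝ) 1)).withDensity (fun s => ENNReal.ofReal (f s)) := by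
  have hnonneg : ∀ u ∈ Icc (0 : ℝ) 1, 0 ≤ f u := fun u hu => by
    refine (hderiv u hu).nonneg_of_monotoneOn ?_ ?_
    · exact (uniqueDiffOn_Icc_zero_one u hu).accPt
    · intro a _ b _ hab
      exact measureReal_mono (Iic_subset_Iic.2 hab)
  refine ⟨hnonneg, ?_⟩
  have hmem : ∀ᵐ x ∂ν, x ∈ Icc (0 : ℝ) 1 := hν.ae_le (ae_restrict_mem measurableSet_Icc)
  have hzero : ∀ a ≤ (0 : ℝ), ν (Iic a) = 0 := fun a ha => by
    refine hν ?_
    rw [Measure.restrict_apply measurableSet_Iic]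
    refine measure_mono_null (t := {0}) ?_ (by simp)
    rintro x ⟨hx, hx0, -⟩
    exact le_antisymm (le_trans hx ha) hx0
  refine Measure.ext_of_Iic _ _ fun a => ?_
  rw [withDensity_apply _ measurableSet_Iic, Measure.restrict_restrict measurableSet_Iic]
  rcases le_or_gt a 0 with ha | ha
  · rw [hzero a ha, setLIntegral_measure_zero]
    refine measure_mono_null (t := {0}) ?_ (by simp)
    rintro x ⟨hx, hx0, -⟩
    exact le_antisymm (le_trans hx ha) hx0
  · have hset : Iic a ∩ Icc (0 : ℝ) 1 = Icc 0 (min a 1) := by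
      ext x
      simp only [mem_inter_iff, mem_Iic, mem_Icc, le_min_iff]
      tauto
    have hb0 : 0 ≤ min a 1 := le_min ha.le zero_le_one
    have hb1 : min a 1 ≤ 1 := min_le_right _ _
    have hcongr : ν (Iic a) = ν (Iic (min a 1)) := by
      refine measure_congr (Filter.eventuallyEq_set.2 ?_)
      filter_upwards [hmem] with x hx
      simp [hx.2]
    have hftc : ∫ s in (0 : ℝ)..min a 1, f s = ν.real (Iic (min a 1)) - ν.real (Iic 0) :=
      intervalIntegral.integral_eq_sub_of_hasDerivAt_of_le hb0
        (fun u hu => ((hderiv u ⟨hu.1, hu.2.trans hb1⟩).continuousWithinAt).mono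
          (Icc_subset_Icc_right hb1))
        (fun u hu => (hderiv u ⟨hu.1.le, hu.2.le.trans hb1⟩).hasDerivAt
          (Icc_mem_nhds hu.1 (hu.2.trans_le hb1)))
        (hf.intervalIntegrable _ _)
    have hreal0 : ν.real (Iic 0) = 0 := by simp [Measure.real, hzero 0 le_rfl]
    rw [hreal0, sub_zero, intervalIntegral.integral_of_le hb0,
      ← integral_Icc_eq_integral_Ioc] at hftc
    rw [hset, hcongr, ← ofReal_integral_eq_lintegral_ofReal hf.continuousOn.integrableOn_Icc,
      hftc, ofReal_measureReal]
    filter_upwards [ae_restrict_mem measurableSet_Icc] with x hx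
    exact hnonneg x ⟨hx.1, hx.2.trans hb1⟩

/-- Integrating `1{V ≤ v} g(U)` amounts to integrating `g` against `∂₁C(·, v)`. -/
theorem integral_indicator_le_mul {Ω : Type*} [MeasurableSpace Ω] {P : Measure Ω}
    [IsProbabilityMeasure P] {U V : Ω → ℝ} (hU : Measurable U) (hV : Measurable V)
    (hUunif : Measure.map U P = volume.restrict (Icc (0 : ℝ) 1)) {v : ℝ} {f : ℝ → ℝ}
    (hf : Continuous f)
    (hderiv : ∀ u ∈ Icc (0 : ℝ) 1,
      HasDerivWithinAt (fun u => P.real {ω | U ω ≤ u ∧ V ω ≤ v}) (f u) (Icc 0 1) u)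
    {g : ℝ → ℝ} (hg : Measurable g) :
    ∫ ω, (if V ω ≤ v then (1 : ℝ) else 0) * g (U ω) ∂P = ∫ s in Icc (0 : ℝ) 1, f s * g s := by
  have hS : MeasurableSet {ω | V ω ≤ v} := measurableSet_le hV measurable_const
  have hcdf : ∀ u, ((P.restrict {ω | V ω ≤ v}).map U).real (Iic u) =
      P.real {ω | U ω ≤ u ∧ V ω ≤ v} := fun u => by
    rw [Measure.real, Measure.map_apply hU measurableSet_Iic,
      Measure.restrict_apply (hU measurableSet_Iic)]
    rfl
  obtain ⟨hnonneg, hlaw⟩ := eq_withDensity_of_hasDerivWithinAt_cdf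
    (ν := (P.restrict {ω | V ω ≤ v}).map U) (f := f)
    (hUunif ▸ (Measure.map_mono Measure.restrict_le_self hU).absolutelyContinuous) hf
    (by simpa only [hcdf] using hderiv)
  calc ∫ ω, (if V ω ≤ v then (1 : ℝ) else 0) * g (U ω) ∂P
      = ∫ ω in {ω | V ω ≤ v}, g (U ω) ∂P := by
        rw [← integral_indicator hS]
        refine integral_congr_ae (ae_of_all _ fun ω => ?_)
        by_cases h : V ω ≤ v <;> simp [h]
    _ = ∫ s, g s ∂((P.restrict {ω | V ω ≤ v}).map U) :=
        (integral_map hU.aemeasurable hg.aestronglyMeasurable).symm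
    _ = ∫ s in Icc (0 : ℝ) 1, f s * g s := by
        rw [hlaw, integral_withDensity_eq_integral_toReal_smul
          hf.measurable.ennreal_ofReal (ae_of_all _ fun _ => ENNReal.ofReal_lt_top)]
        refine setIntegral_congr_fun measurableSet_Icc fun s hs => ?_
        simp only [ENNReal.toReal_ofReal (hnonneg s hs), smul_eq_mul]

/-- Averaged form of `integral_indicator_le_mul` over a family of thresholds `m x`. -/
theorem integral_integral_indicator_le_mul {Ω X : Type*} [MeasurableSpace Ω] [MeasurableSpace X]
    {P : Measure Ω} [IsProbabilityMeasure P] {κ : Measure X} [IsFiniteMeasure κ]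
    {U V : Ω → ℝ} (hU : Measurable U) (hV : Measurable V)
    (hUunif : Measure.map U P = volume.restrict (Icc (0 : ℝ) 1))
    {T : ℝ → ℝ → ℝ} (hT : Continuous (Function.uncurry T)) {M : ℝ} (hM : ∀ u v, |T u v| ≤ M)
    (hderiv : ∀ v ∈ Icc (0 : ℝ) 1, ∀ u ∈ Icc (0 : ℝ) 1,
      HasDerivWithinAt (fun u => P.real {ω | U ω ≤ u ∧ V ω ≤ v}) (T u v) (Icc 0 1) u)
    {m : X → ℝ} (hm : Measurable m) (hm01 : ∀ᵐ x ∂κ, m x ∈ Icc (0 : ℝ) 1)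
    {g : ℝ → X → ℝ} (hg : Measurable (Function.uncurry g)) {K : ℝ} (hK : ∀ s x, |g s x| ≤ K) :
    ∫ ω, ∫ x, (if V ω ≤ m x then (1 : ℝ) else 0) * g (U ω) x ∂κ ∂P =
      ∫ s in Icc (0 : ℝ) 1, ∫ x, T s (m x) * g s x ∂κ := by
  have hM0 : 0 ≤ M := (abs_nonneg _).trans (hM 0 0)
  have hleft : Integrable (Function.uncurry fun ω x =>
      (if V ω ≤ m x then (1 : ℝ) else 0) * g (U ω) x) (P.prod κ) := by
    refine Integrable.of_bound (C := K) (Measurable.aestronglyMeasurable ?_)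
      (ae_of_all _ fun p => ?_)
    · exact (Measurable.ite (measurableSet_le (hV.comp measurable_fst) (hm.comp measurable_snd))
        measurable_const measurable_const).mul
        (hg.comp (by fun_prop : Measurable fun p : Ω × X => (U p.1, p.2)))
    · have hK' := hK (U p.1) p.2
      rw [Function.uncurry, norm_mul]
      split_ifs
      · simpa using hK'
      · simpa using (abs_nonneg _).trans hK'
  have hright : Integrable (Function.uncurry fun s x => T s (m x) * g s x)
      ((volume.restrict (Icc (0 : ℝ) 1)).prod κ) := by
    refine Integrable.of_bound (C := M * K) (Measurable.aestronglyMeasurable ?_)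
      (ae_of_all _ fun p => ?_)
    · exact (hT.measurable.comp
        (by fun_prop : Measurable fun p : ℝ × X => (p.1, m p.2))).mul hg
    · rw [Function.uncurry, norm_mul]
      exact mul_le_mul (hM _ _) (hK _ _) (norm_nonneg _) hM0
  rw [integral_integral_swap hleft, integral_integral_swap hright]
  refine integral_congr_ae ?_
  filter_upwards [hm01] with x hx
  exact integral_indicator_le_mul hU hV hUunif
    (hT.comp (by fun_prop : Continuous fun s : ℝ => (s, m x))) (hderiv _ hx)
    (hg.comp (by fun_prop : Measurable fun s : ℝ => (s, x)))

/-- A function continuous on the unit square agrees there with a bounded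
continuous function on the plane. -/
theorem exists_continuous_bounded_extension_unitSquare {τ : ℝ → ℝ → ℝ}
    (hτ : ContinuousOn (fun p : ℝ × ℝ => τ p.1 p.2) (Icc 0 1 ×ˢ Icc 0 1)) :
    ∃ (T : ℝ → ℝ → ℝ) (M : ℝ), Continuous (Function.uncurry T) ∧ (∀ u v, |T u v| ≤ M) ∧
      ∀ u ∈ Icc (0 : ℝ) 1, ∀ v ∈ Icc (0 : ℝ) 1, T u v = τ u v := by
  obtain ⟨M, hM⟩ := (isCompact_Icc.prod isCompact_Icc).exists_bound_of_continuousOn hτ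
  have hclamp : ∀ x : ℝ, max 0 (min 1 x) ∈ Icc (0 : ℝ) 1 := fun x =>
    ⟨le_max_left _ _, max_le zero_le_one (min_le_left _ _)⟩
  refine ⟨fun u v => τ (max 0 (min 1 u)) (max 0 (min 1 v)), M, ?_,
    fun u v => hM (_, _) ⟨hclamp u, hclamp v⟩, fun u hu v hv => ?_⟩
  · exact hτ.comp_continuous
      (f := fun p : ℝ × ℝ => (max 0 (min 1 p.1), max 0 (min 1 p.2))) (by fun_prop)
      fun p => ⟨hclamp _, hclamp _⟩
  · simp [hu.1, hu.2, hv.1, hv.2]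


/-- for `(U,V)` with uniform marginals on `[0,1]`, joint distribution function
`C(u,v) = P(U ≤ u, V ≤ v)` differentiable in its first argument with `∂₁C = τ`, and
`Z₁ = ∫₀¹ 1{V ≤ v} τ(U,v) dv`, one has
`Var(Z₁) = ∫ τ(s, v∧w) τ(s,v) τ(s,w) ds dv dw - (∫ τ²(u,v) du dv)²`. -/
theorem stmt16 {Ω : Type*} [MeasurableSpace Ω] (P : Measure Ω) [IsProbabilityMeasure P]
    (U V : Ω → ℝ) (hU : Measurable U) (hV : Measurable V)
    (hUunif : Measure.map U P = volume.restrict (Icc (0 : ℝ) 1))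
    (hVunif : Measure.map V P = volume.restrict (Icc (0 : ℝ) 1))
    (C : ℝ → ℝ → ℝ)
    (hC : ∀ u v, C u v = (P {ω | U ω ≤ u ∧ V ω ≤ v}).toReal)
    (τ : ℝ → ℝ → ℝ)
    (hτcont : ContinuousOn (fun p : ℝ × ℝ => τ p.1 p.2) (Icc 0 1 ×ˢ Icc 0 1))
    (hderiv : ∀ v ∈ Icc (0 : ℝ) 1, ∀ u ∈ Icc (0 : ℝ) 1,
      HasDerivWithinAt (fun u => C u v) (τ u v) (Icc 0 1) u)
    (Z₁ : Ω → ℝ)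
    (hZ₁ : ∀ ω, Z₁ ω = ∫ v in (0:ℝ)..1, (if V ω ≤ v then (1 : ℝ) else 0) * τ (U ω) v) :
    (∫ ω, (Z₁ ω) ^ 2 ∂P) - (∫ ω, Z₁ ω ∂P) ^ 2 =
      (∫ s in (0:ℝ)..1, ∫ v in (0:ℝ)..1, ∫ w in (0:ℝ)..1,
          τ s (min v w) * τ s v * τ s w)
        - (∫ u in (0:ℝ)..1, ∫ v in (0:ℝ)..1, τ u v ^ 2) ^ 2 := by
  obtain ⟨T, M, hT, hM, hTτ⟩ := exists_continuous_bounded_extension_unitSquare hτcont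
  have hM0 : 0 ≤ M := (abs_nonneg _).trans (hM 0 0)
  have hd : ∀ v ∈ Icc (0 : ℝ) 1, ∀ u ∈ Icc (0 : ℝ) 1,
      HasDerivWithinAt (fun u => P.real {ω | U ω ≤ u ∧ V ω ≤ v}) (T u v) (Icc 0 1) u := by
    intro v hv u hu
    have h := hderiv v hv u hu
    rw [← hTτ u hu v hv] at h
    exact h.congr (fun x _ => (hC x v).symm) (hC u v).symm
  have hIcc : ∀ f : ℝ → ℝ, ∫ x in (0:ℝ)..1, f x = ∫ x in Icc (0:ℝ) 1, f x := fun f => by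
    rw [intervalIntegral.integral_of_le zero_le_one, integral_Icc_eq_integral_Ioc]
  have hU01 : ∀ᵐ ω ∂P, U ω ∈ Icc (0:ℝ) 1 :=
    ae_of_ae_map hU.aemeasurable (hUunif ▸ ae_restrict_mem measurableSet_Icc)
  have hZ : ∀ᵐ ω ∂P, Z₁ ω =
      ∫ v in Icc (0:ℝ) 1, (if V ω ≤ v then (1 : ℝ) else 0) * T (U ω) v := by
    filter_upwards [hU01] with ω hω
    rw [hZ₁, hIcc]
    refine setIntegral_congr_fun measurableSet_Icc fun v hv => ?_
    simp only [hTτ _ hω v hv]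
  have hmean : ∫ ω, Z₁ ω ∂P = ∫ u in (0:ℝ)..1, ∫ v in (0:ℝ)..1, τ u v ^ 2 := by
    rw [integral_congr_ae hZ, integral_integral_indicator_le_mul (m := fun v => v)
      hU hV hUunif hT hM hd measurable_id (ae_restrict_mem measurableSet_Icc) hT.measurable hM]
    simp only [hIcc]
    refine setIntegral_congr_fun measurableSet_Icc fun s hs =>
      setIntegral_congr_fun measurableSet_Icc fun v hv => ?_
    simp only [hTτ s hs v hv, sq]
  have hprodmem : ∀ᵐ p : ℝ × ℝ ∂(volume.restrict (Icc (0:ℝ) 1)).prod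
      (volume.restrict (Icc (0:ℝ) 1)), p ∈ Icc (0:ℝ) 1 ×ˢ Icc (0:ℝ) 1 := by
    rw [Measure.prod_restrict]
    exact ae_restrict_mem (measurableSet_Icc.prod measurableSet_Icc)
  have hTfst : Continuous fun p : ℝ × ℝ × ℝ => T p.1 p.2.1 :=
    hT.comp (by fun_prop : Continuous fun p : ℝ × ℝ × ℝ => (p.1, p.2.1))
  have hTsnd : Continuous fun p : ℝ × ℝ × ℝ => T p.1 p.2.2 :=
    hT.comp (by fun_prop : Continuous fun p : ℝ × ℝ × ℝ => (p.1, p.2.2))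
  have hsq : ∫ ω, (Z₁ ω) ^ 2 ∂P = ∫ s in (0:ℝ)..1, ∫ v in (0:ℝ)..1, ∫ w in (0:ℝ)..1,
      τ s (min v w) * τ s v * τ s w := by
    have hZsq : ∀ᵐ ω ∂P, Z₁ ω ^ 2 =
        ∫ p : ℝ × ℝ, (if V ω ≤ min p.1 p.2 then (1 : ℝ) else 0) * (T (U ω) p.1 * T (U ω) p.2)
          ∂(volume.restrict (Icc (0:ℝ) 1)).prod (volume.restrict (Icc (0:ℝ) 1)) := by
      filter_upwards [hZ] with ω hω
      rw [hω, sq, ← integral_prod_mul]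
      refine integral_congr_ae (ae_of_all _ fun p => ?_)
      by_cases h₁ : V ω ≤ p.1 <;> by_cases h₂ : V ω ≤ p.2 <;> simp [h₁, h₂]
    rw [integral_congr_ae hZsq, integral_integral_indicator_le_mul
      (m := fun p : ℝ × ℝ => min p.1 p.2) (g := fun s p => T s p.1 * T s p.2)
      (K := M * M) hU hV hUunif hT hM hd
      (by fun_prop) ?_ (hTfst.mul hTsnd).measurable ?_]
    · simp only [hIcc]
      refine setIntegral_congr_fun measurableSet_Icc fun s hs => ?_
      rw [integral_prod]
      · refine setIntegral_congr_fun measurableSet_Icc fun v hv =>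
          setIntegral_congr_fun measurableSet_Icc fun w hw => ?_
        simp only [hTτ s hs v hv, hTτ s hs w hw,
          hTτ s hs _ ⟨le_min hv.1 hw.1, (min_le_left v w).trans hv.2⟩, mul_assoc]
      · refine Integrable.of_bound (C := M * (M * M)) (Continuous.aestronglyMeasurable ?_)
          (ae_of_all _ fun p => ?_)
        · exact (hT.comp (by fun_prop : Continuous fun p : ℝ × ℝ => (s, min p.1 p.2))).mul
            ((hTfst.mul hTsnd).comp (by fun_prop : Continuous fun p : ℝ × ℝ => (s, p)))
        · rw [norm_mul, norm_mul]
          exact mul_le_mul (hM _ _) (mul_le_mul (hM _ _) (hM _ _) (norm_nonneg _) hM0)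
            (by positivity) hM0
    · filter_upwards [hprodmem] with p hp
      exact ⟨le_min hp.1.1 hp.2.1, (min_le_left _ _).trans hp.1.2⟩
    · intro s p
      rw [abs_mul]
      exact mul_le_mul (hM _ _) (hM _ _) (abs_nonneg _) hM0
  rw [hsq, hmean]
end

section
/- Let (U,V) be a random vector with values in [0,1]², with U and V each uniformly distributed on [0,1], joint distribution function C(u,v) = P(U ≤ u, V ≤ v), and suppose C is continuously differentiable in its first argument with τ(u,v) = ∂₁C(u,v), and that τ is itself continuously differentiable in its first argument with derivative ∂₁τ. Define Z₁ = ∫₀¹ 1{V ≤ v} τ(U,v) dv and Z₂ = ∫₀¹∫₀¹ 1{U ≤ u} τ(u,v) ∂₁τ(u,v) du dv. Then 2·Cov(Z₁, Z₂) = − ∫_{[0,1]³} τ²(u,v) τ²(u,w) du dv dw + ( ∫_{[0,1]²} τ²(u,v) du dv )². -/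
open MeasureTheory Set

section UniformLaw

variable {Ω : Type*} [MeasurableSpace Ω] {P : Measure Ω} {U : Ω → ℝ}

lemma ae_mem_Icc_of_map_eq (hU : Measurable U)
    (hUunif : Measure.map U P = volume.restrict (Icc (0 : ℝ) 1)) :
    ∀ᵐ ω ∂P, U ω ∈ Icc (0 : ℝ) 1 := by
  have h : ∀ᵐ u ∂(Measure.map U P), u ∈ Icc (0 : ℝ) 1 := by
    rw [hUunif]; exact ae_restrict_mem measurableSet_Icc
  exact ae_of_ae_map hU.aemeasurable h

lemma ae_pos_of_map_eq (hU : Measurable U)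
    (hUunif : Measure.map U P = volume.restrict (Icc (0 : ℝ) 1)) :
    ∀ᵐ ω ∂P, 0 < U ω := by
  have h : ∀ᵐ u ∂(Measure.map U P), 0 < u := by
    rw [hUunif, ← restrict_Ioc_eq_restrict_Icc]
    filter_upwards [ae_restrict_mem measurableSet_Ioc] with u hu using hu.1
  exact ae_of_ae_map hU.aemeasurable h

lemma integral_comp_eq_of_map_eq (hU : Measurable U)
    (hUunif : Measure.map U P = volume.restrict (Icc (0 : ℝ) 1)) {f : ℝ → ℝ}
    (hf : Continuous f) : ∫ ω, f (U ω) ∂P = ∫ u in (0 : ℝ)..1, f u := by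
  rw [← integral_map hU.aemeasurable hf.aestronglyMeasurable, hUunif,
    integral_Icc_eq_integral_Ioc, intervalIntegral.integral_of_le zero_le_one]

/-- A differentiable sub-distribution function `u ↦ P (U ≤ u, E)` has its derivative as density. -/
lemma map_restrict_eq_withDensity [IsFiniteMeasure P] (hU : Measurable U)
    (hUunif : Measure.map U P = volume.restrict (Icc (0 : ℝ) 1))
    {E : Set Ω} {t : ℝ → ℝ} (ht : Continuous t)
    (ht0 : ∀ u ∈ Icc (0 : ℝ) 1, 0 ≤ t u)
    (hd : ∀ u ∈ Icc (0 : ℝ) 1,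
      HasDerivWithinAt (fun u => P.real ({ω | U ω ≤ u} ∩ E)) (t u) (Icc 0 1) u) :
    (P.restrict E).map U =
      (volume.restrict (Icc (0 : ℝ) 1)).withDensity (fun u => ENNReal.ofReal (t u)) := by
  refine Measure.ext_of_Iic _ _ fun a => ?_
  rw [Measure.map_apply hU measurableSet_Iic,
    Measure.restrict_apply (hU measurableSet_Iic), withDensity_apply _ measurableSet_Iic,
    Measure.restrict_restrict measurableSet_Iic]
  have hzero : P ({ω | U ω ≤ 0} ∩ E) = 0 := by
    refine measure_mono_null inter_subset_left ?_
    have := ae_pos_of_map_eq hU hUunif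
    rw [ae_iff] at this
    simpa using this
  rcases lt_or_ge a 0 with ha | ha
  · have h1 : P (U ⁻¹' Iic a ∩ E) = 0 := by
      refine measure_mono_null (inter_subset_inter_left _ fun ω hω => ?_) hzero
      exact le_trans hω ha.le
    have h2 : Iic a ∩ Icc (0 : ℝ) 1 = ∅ := by
      ext x; simp only [mem_inter_iff, mem_Iic, mem_Icc, mem_empty_iff_false, iff_false]
      rintro ⟨h, h', -⟩; linarith
    simp [h1, h2]
  · set b := min a 1 with hb
    have hb0 : 0 ≤ b := le_min ha zero_le_one
    have hb1 : b ≤ 1 := min_le_right _ _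
    have h2 : Iic a ∩ Icc (0 : ℝ) 1 = Icc 0 b := by
      ext x; simp only [mem_inter_iff, mem_Iic, mem_Icc, hb, le_min_iff]; tauto
    have h1 : P (U ⁻¹' Iic a ∩ E) = P ({ω | U ω ≤ b} ∩ E) := by
      refine measure_congr ?_
      filter_upwards [ae_mem_Icc_of_map_eq hU hUunif] with ω hω
      refine propext (and_congr_left fun _ => ?_)
      change U ω ≤ a ↔ U ω ≤ b
      simp [hb, hω.2]
    have hsub : Icc 0 b ⊆ Icc (0 : ℝ) 1 := Icc_subset_Icc_right hb1
    have hint : ∫ u in (0 : ℝ)..b, t u = P.real ({ω | U ω ≤ b} ∩ E) := by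
      rw [intervalIntegral.integral_eq_sub_of_hasDerivAt_of_le hb0
        (f := fun u => P.real ({ω | U ω ≤ u} ∩ E))
        (fun u hu => ((hd u (hsub hu)).continuousWithinAt).mono hsub)
        (fun u hu => (hd u (hsub (Ioo_subset_Icc_self hu))).hasDerivAt
          (Icc_mem_nhds hu.1 (hu.2.trans_le hb1)))
        (ht.intervalIntegrable _ _)]
      simp [measureReal_def, hzero]
    rw [h1, h2, ← ofReal_integral_eq_lintegral_ofReal ht.continuousOn.integrableOn_Icc
      ((ae_restrict_iff' measurableSet_Icc).2 (.of_forall fun u hu => ht0 u (hsub hu))),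
      integral_Icc_eq_integral_Ioc, ← intervalIntegral.integral_of_le hb0, hint,
      ofReal_measureReal]

lemma setIntegral_comp_eq_of_hasDerivWithinAt [IsFiniteMeasure P] (hU : Measurable U)
    (hUunif : Measure.map U P = volume.restrict (Icc (0 : ℝ) 1))
    {E : Set Ω} {t f : ℝ → ℝ} (ht : Continuous t) (hf : Continuous f)
    (hd : ∀ u ∈ Icc (0 : ℝ) 1,
      HasDerivWithinAt (fun u => P.real ({ω | U ω ≤ u} ∩ E)) (t u) (Icc 0 1) u) :
    ∫ ω in E, f (U ω) ∂P = ∫ u in (0 : ℝ)..1, t u * f u := by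
  have ht0 : ∀ u ∈ Icc (0 : ℝ) 1, 0 ≤ t u := fun u hu => by
    rw [← (hd u hu).derivWithin (uniqueDiffOn_Icc zero_lt_one u hu)]
    refine MonotoneOn.derivWithin_nonneg fun x _ y _ hxy => ?_
    exact measureReal_mono (inter_subset_inter_left _ fun ω hω => le_trans hω hxy)
  rw [← integral_map hU.aemeasurable hf.aestronglyMeasurable,
    map_restrict_eq_withDensity hU hUunif ht ht0 hd,
    integral_withDensity_eq_integral_toReal_smul (by fun_prop) (by simp),
    intervalIntegral.integral_of_le zero_le_one, ← integral_Icc_eq_integral_Ioc]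
  refine setIntegral_congr_fun measurableSet_Icc fun u hu => ?_
  simp [ENNReal.toReal_ofReal (ht0 u hu)]

end UniformLaw

/-- Constant extension of a function on the unit square to the plane. -/
noncomputable def extendSquare (g : ℝ → ℝ → ℝ) (p : ℝ × ℝ) : ℝ :=
  g (projIcc 0 1 zero_le_one p.1 : ℝ) (projIcc 0 1 zero_le_one p.2 : ℝ)

lemma extendSquare_eq (g : ℝ → ℝ → ℝ) {u v : ℝ} (hu : u ∈ Icc (0 : ℝ) 1)
    (hv : v ∈ Icc (0 : ℝ) 1) : extendSquare g (u, v) = g u v := by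
  simp [extendSquare, projIcc_of_mem _ hu, projIcc_of_mem _ hv]

lemma continuous_extendSquare {g : ℝ → ℝ → ℝ}
    (hg : ContinuousOn (fun p : ℝ × ℝ => g p.1 p.2) (Icc 0 1 ×ˢ Icc 0 1)) :
    Continuous (extendSquare g) := by
  refine hg.comp_continuous (f := fun p : ℝ × ℝ =>
    ((projIcc 0 1 zero_le_one p.1 : ℝ), (projIcc 0 1 zero_le_one p.2 : ℝ))) ?_ ?_
  · exact (continuous_subtype_val.comp (continuous_projIcc.comp continuous_fst)).prodMk
      (continuous_subtype_val.comp (continuous_projIcc.comp continuous_snd))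
  · exact fun p => ⟨Subtype.coe_prop _, Subtype.coe_prop _⟩

lemma exists_bound_extendSquare {g : ℝ → ℝ → ℝ}
    (hg : ContinuousOn (fun p : ℝ × ℝ => g p.1 p.2) (Icc 0 1 ×ˢ Icc 0 1)) :
    ∃ M, ∀ p, |extendSquare g p| ≤ M := by
  obtain ⟨M, hM⟩ := (isCompact_Icc.prod isCompact_Icc).exists_bound_of_continuousOn hg
  exact ⟨M, fun p => hM ((projIcc 0 1 zero_le_one p.1 : ℝ), (projIcc 0 1 zero_le_one p.2 : ℝ))
    ⟨Subtype.coe_prop _, Subtype.coe_prop _⟩⟩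

/-- The tower property for `∫₀¹ 1{V ≤ v} T(U,v) dv` when `T(·,v)` is the density of `U` on
`{V ≤ v}`. -/
lemma integral_indicator_mul_comp {Ω : Type*} [MeasurableSpace Ω] {P : Measure Ω}
    [IsProbabilityMeasure P] {U V : Ω → ℝ} (hU : Measurable U) (hV : Measurable V)
    (hUunif : Measure.map U P = volume.restrict (Icc (0 : ℝ) 1))
    {T : ℝ × ℝ → ℝ} (hT : Continuous T) {M : ℝ} (hM : ∀ p, |T p| ≤ M)
    (hd : ∀ v ∈ Icc (0 : ℝ) 1, ∀ u ∈ Icc (0 : ℝ) 1,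
      HasDerivWithinAt (fun u => P.real ({ω | U ω ≤ u} ∩ {ω | V ω ≤ v})) (T (u, v)) (Icc 0 1) u)
    {h : ℝ → ℝ} (hh : Continuous h) {K : ℝ} (hK : ∀ u, |h u| ≤ K) :
    ∫ ω, (∫ v in (0 : ℝ)..1, (if V ω ≤ v then (1 : ℝ) else 0) * T (U ω, v)) * h (U ω) ∂P =
      ∫ u in (0 : ℝ)..1, (∫ v in (0 : ℝ)..1, T (u, v) ^ 2) * h u := by
  have hM0 : 0 ≤ M := (abs_nonneg _).trans (hM 0)
  have hint : Integrable (Function.uncurry fun ω v =>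
      ((if V ω ≤ v then (1 : ℝ) else 0) * T (U ω, v)) * h (U ω))
      (P.prod (volume.restrict (Ioc (0 : ℝ) 1))) := by
    refine Integrable.of_bound (C := 1 * M * K) ?_ (.of_forall fun p => ?_)
    · refine Measurable.aestronglyMeasurable ?_
      refine Measurable.mul (Measurable.mul ?_ ?_) ?_
      · exact Measurable.ite (measurableSet_le (hV.comp measurable_fst) measurable_snd)
          measurable_const measurable_const
      · exact hT.measurable.comp ((hU.comp measurable_fst).prodMk measurable_snd)
      · exact hh.measurable.comp (hU.comp measurable_fst)
    · simp only [Function.uncurry, norm_mul, Real.norm_eq_abs]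
      gcongr
      · split_ifs <;> simp
      · exact hM _
      · exact hK _
  have hsq : Continuous (Function.uncurry fun v u => T (u, v) * (T (u, v) * h u)) := by
    have := hT.comp continuous_swap
    exact this.mul (this.mul (hh.comp continuous_snd))
  calc _ = ∫ ω, (∫ v in Ioc (0 : ℝ) 1,
        ((if V ω ≤ v then (1 : ℝ) else 0) * T (U ω, v)) * h (U ω)) ∂P := by
        simp only [intervalIntegral.integral_of_le zero_le_one, integral_mul_const]
    _ = ∫ v in Ioc (0 : ℝ) 1, ∫ ω,
        ((if V ω ≤ v then (1 : ℝ) else 0) * T (U ω, v)) * h (U ω) ∂P := integral_integral_swap hint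
    _ = ∫ v in Ioc (0 : ℝ) 1, ∫ u in Ioc (0 : ℝ) 1, T (u, v) * (T (u, v) * h u) := by
        refine setIntegral_congr_fun measurableSet_Ioc fun v hv => ?_
        have hcT : Continuous fun u => T (u, v) := hT.comp (by fun_prop)
        have := setIntegral_comp_eq_of_hasDerivWithinAt (f := fun u => T (u, v) * h u)
          hU hUunif hcT (hcT.mul hh) (hd v (Ioc_subset_Icc_self hv))
        rw [intervalIntegral.integral_of_le zero_le_one] at this
        rw [← this, ← integral_indicator (measurableSet_le hV measurable_const)]
        refine integral_congr_ae (.of_forall fun ω => ?_)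
        simp only [indicator, mem_ofPred_eq]
        split_ifs <;> simp
    _ = ∫ u in Ioc (0 : ℝ) 1, ∫ v in Ioc (0 : ℝ) 1, T (u, v) * (T (u, v) * h u) := by
        refine integral_integral_swap ?_
        rw [Measure.prod_restrict]
        exact (hsq.continuousOn.integrableOn_compact
          (isCompact_Icc.prod isCompact_Icc)).mono_set
          (prod_mono Ioc_subset_Icc_self Ioc_subset_Icc_self)
    _ = _ := by
        simp only [intervalIntegral.integral_of_le zero_le_one, ← integral_mul_const]
        refine integral_congr_ae (.of_forall fun u => ?_)
        refine integral_congr_ae (.of_forall fun v => ?_)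
        simp only; ring

lemma two_mul_integral_mul_deriv {T D : ℝ × ℝ → ℝ} (hT : Continuous T) (hD : Continuous D)
    (hd : ∀ v ∈ Icc (0 : ℝ) 1, ∀ u ∈ Icc (0 : ℝ) 1,
      HasDerivWithinAt (fun u => T (u, v)) (D (u, v)) (Icc 0 1) u)
    {a : ℝ} (ha : a ∈ Icc (0 : ℝ) 1) :
    2 * (∫ u in (0 : ℝ)..1, ∫ v in (0 : ℝ)..1,
        (if a ≤ u then (1 : ℝ) else 0) * (T (u, v) * D (u, v))) =
      (∫ v in (0 : ℝ)..1, T (1, v) ^ 2) - ∫ v in (0 : ℝ)..1, T (a, v) ^ 2 := by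
  have hcont : Continuous fun p : ℝ × ℝ => T p * D p := hT.mul hD
  have hset : Ici a ∩ Icc (0 : ℝ) 1 = Icc a 1 := by
    ext x; simp only [mem_inter_iff, mem_Ici, mem_Icc]
    exact ⟨fun h => ⟨h.1, h.2.2⟩, fun h => ⟨h.1, ha.1.trans h.1, h.2⟩⟩
  have hFTC : ∀ v ∈ Icc (0 : ℝ) 1,
      2 * ∫ u in a..1, T (u, v) * D (u, v) = T (1, v) ^ 2 - T (a, v) ^ 2 := fun v hv => by
    have hsub : Icc a 1 ⊆ Icc (0 : ℝ) 1 := Icc_subset_Icc_left ha.1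
    rw [← intervalIntegral.integral_const_mul,
      intervalIntegral.integral_eq_sub_of_hasDerivAt_of_le ha.2
        (f := fun u => T (u, v) ^ 2) (by fun_prop) (fun u hu => ?_)
        (Continuous.intervalIntegrable (by fun_prop) _ _)]
    have := ((hd v hv u (hsub (Ioo_subset_Icc_self hu))).hasDerivAt
      (Icc_mem_nhds (ha.1.trans_lt hu.1) hu.2)).pow 2
    refine this.congr_deriv ?_
    simp; ring
  have hswap : ∫ u in (0 : ℝ)..1, ∫ v in (0 : ℝ)..1,
        (if a ≤ u then (1 : ℝ) else 0) * (T (u, v) * D (u, v)) =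
      ∫ v in (0 : ℝ)..1, ∫ u in a..1, T (u, v) * D (u, v) := by
    calc _ = ∫ u in Icc (0 : ℝ) 1, (Ici a).indicator
            (fun u => ∫ v in (0 : ℝ)..1, T (u, v) * D (u, v)) u := by
          rw [intervalIntegral.integral_of_le zero_le_one, ← integral_Icc_eq_integral_Ioc]
          refine integral_congr_ae (.of_forall fun u => ?_)
          simp only [indicator, mem_Ici, intervalIntegral.integral_const_mul]
          split_ifs <;> simp
      _ = ∫ u in a..1, ∫ v in (0 : ℝ)..1, T (u, v) * D (u, v) := by
          rw [integral_indicator measurableSet_Ici, Measure.restrict_restrict measurableSet_Ici,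
            hset, integral_Icc_eq_integral_Ioc, ← intervalIntegral.integral_of_le ha.2]
      _ = _ := by
          refine intervalIntegral_intervalIntegral_swap
            (F := fun u v => T (u, v) * D (u, v)) ?_
          exact (hcont.continuousOn.integrableOn_compact
            (isCompact_uIcc.prod isCompact_uIcc)).mono_set
            (prod_mono uIoc_subset_uIcc uIoc_subset_uIcc)
  rw [hswap, ← intervalIntegral.integral_const_mul, ← intervalIntegral.integral_sub
    (Continuous.intervalIntegrable (by fun_prop) _ _)
    (Continuous.intervalIntegrable (by fun_prop) _ _)]
  refine intervalIntegral.integral_congr fun v hv => hFTC v ?_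
  rwa [uIcc_of_le zero_le_one] at hv

/-- for `(U,V)` with uniform marginals on `[0,1]`, copula-type distribution
function `C` with `∂₁C = τ`, `τ` continuously differentiable in its first argument with
derivative `∂₁τ = dτ`, and
`Z₁ = ∫₀¹ 1{V ≤ v} τ(U,v) dv`, `Z₂ = ∫₀¹∫₀¹ 1{U ≤ u} τ(u,v) ∂₁τ(u,v) du dv`, one has
`2 Cov(Z₁, Z₂) = -∫ τ²(u,v) τ²(u,w) du dv dw + (∫ τ²(u,v) du dv)²`. -/
theorem stmt17 {Ω : Type*} [MeasurableSpace Ω] (P : Measure Ω) [IsProbabilityMeasure P]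
    (U V : Ω → ℝ) (hU : Measurable U) (hV : Measurable V)
    (hUunif : Measure.map U P = volume.restrict (Icc (0 : ℝ) 1))
    (hVunif : Measure.map V P = volume.restrict (Icc (0 : ℝ) 1))
    (C : ℝ → ℝ → ℝ)
    (hC : ∀ u v, C u v = (P {ω | U ω ≤ u ∧ V ω ≤ v}).toReal)
    (τ dτ : ℝ → ℝ → ℝ)
    (hCderiv : ∀ v ∈ Icc (0 : ℝ) 1, ∀ u ∈ Icc (0 : ℝ) 1,
      HasDerivWithinAt (fun u => C u v) (τ u v) (Icc 0 1) u)
    (hτcont : ContinuousOn (fun p : ℝ × ℝ => τ p.1 p.2) (Icc 0 1 ×ˢ Icc 0 1))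
    (hτderiv : ∀ v ∈ Icc (0 : ℝ) 1, ∀ u ∈ Icc (0 : ℝ) 1,
      HasDerivWithinAt (fun u => τ u v) (dτ u v) (Icc 0 1) u)
    (hdτcont : ContinuousOn (fun p : ℝ × ℝ => dτ p.1 p.2) (Icc 0 1 ×ˢ Icc 0 1))
    (Z₁ Z₂ : Ω → ℝ)
    (hZ₁ : ∀ ω, Z₁ ω = ∫ v in (0:ℝ)..1, (if V ω ≤ v then (1 : ℝ) else 0) * τ (U ω) v)
    (hZ₂ : ∀ ω, Z₂ ω = ∫ u in (0:ℝ)..1, ∫ v in (0:ℝ)..1,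
      (if U ω ≤ u then (1 : ℝ) else 0) * (τ u v * dτ u v)) :
    2 * ((∫ ω, Z₁ ω * Z₂ ω ∂P) - (∫ ω, Z₁ ω ∂P) * (∫ ω, Z₂ ω ∂P)) =
      -(∫ u in (0:ℝ)..1, ∫ v in (0:ℝ)..1, ∫ w in (0:ℝ)..1, τ u v ^ 2 * τ u w ^ 2)
        + (∫ u in (0:ℝ)..1, ∫ v in (0:ℝ)..1, τ u v ^ 2) ^ 2 := by
  obtain ⟨M, hM⟩ := exists_bound_extendSquare hτcont
  have hT := continuous_extendSquare hτcont
  have hD := continuous_extendSquare hdτcont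
  set T := extendSquare τ
  set D := extendSquare dτ
  have hTeq : ∀ {u v : ℝ}, u ∈ Icc (0 : ℝ) 1 → v ∈ Icc (0 : ℝ) 1 → T (u, v) = τ u v :=
    fun hu hv => extendSquare_eq τ hu hv
  have hDeq : ∀ {u v : ℝ}, u ∈ Icc (0 : ℝ) 1 → v ∈ Icc (0 : ℝ) 1 → D (u, v) = dτ u v :=
    fun hu hv => extendSquare_eq dτ hu hv
  have hmem : ∀ {x : ℝ}, x ∈ uIcc (0 : ℝ) 1 → x ∈ Icc (0 : ℝ) 1 := fun hx => by
    rwa [uIcc_of_le zero_le_one] at hx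
  set A : ℝ → ℝ := fun u => ∫ v in (0 : ℝ)..1, T (u, v) ^ 2 with hA
  have hAeq : ∀ u ∈ Icc (0 : ℝ) 1, ∫ v in (0 : ℝ)..1, τ u v ^ 2 = A u := fun u hu =>
    intervalIntegral.integral_congr fun v hv => by simp only [hTeq hu (hmem hv)]
  have hAcont : Continuous A :=
    intervalIntegral.continuous_parametric_intervalIntegral_of_continuous'
      (f := fun u v => T (u, v) ^ 2) (by fun_prop) 0 1
  have hAbound : ∀ u, |A u| ≤ M ^ 2 := fun u => by
    have := intervalIntegral.norm_integral_le_of_norm_le_const (a := 0) (b := 1) (C := M ^ 2)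
      (f := fun v => T (u, v) ^ 2) fun v _ => by
        rw [norm_pow, Real.norm_eq_abs]
        exact pow_le_pow_left₀ (abs_nonneg _) (hM _) 2
    simpa using this
  have hdT : ∀ v ∈ Icc (0 : ℝ) 1, ∀ u ∈ Icc (0 : ℝ) 1, HasDerivWithinAt
      (fun u => P.real ({ω | U ω ≤ u} ∩ {ω | V ω ≤ v})) (T (u, v)) (Icc 0 1) u := by
    intro v hv u hu
    rw [hTeq hu hv]
    exact (hCderiv v hv u hu).congr_of_mem (fun x _ => (hC x v).symm) hu
  have hdD : ∀ v ∈ Icc (0 : ℝ) 1, ∀ u ∈ Icc (0 : ℝ) 1,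
      HasDerivWithinAt (fun u => T (u, v)) (D (u, v)) (Icc 0 1) u := by
    intro v hv u hu
    rw [hDeq hu hv]
    exact (hτderiv v hv u hu).congr_of_mem (fun x hx => hTeq hx hv) hu
  have hUmem := ae_mem_Icc_of_map_eq hU hUunif
  have hZ₁ae : ∀ᵐ ω ∂P, Z₁ ω =
      ∫ v in (0 : ℝ)..1, (if V ω ≤ v then (1 : ℝ) else 0) * T (U ω, v) := by
    filter_upwards [hUmem] with ω hω
    rw [hZ₁]
    exact intervalIntegral.integral_congr fun v hv => by simp only [hTeq hω (hmem hv)]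
  have hZ₂ae : ∀ᵐ ω ∂P, Z₂ ω = (A 1 - A (U ω)) / 2 := by
    filter_upwards [hUmem] with ω hω
    have h := two_mul_integral_mul_deriv hT hD hdD hω
    have hcongr : Z₂ ω = ∫ u in (0 : ℝ)..1, ∫ v in (0 : ℝ)..1,
        (if U ω ≤ u then (1 : ℝ) else 0) * (T (u, v) * D (u, v)) := by
      rw [hZ₂]
      refine intervalIntegral.integral_congr fun u hu => ?_
      refine intervalIntegral.integral_congr fun v hv => ?_
      simp only [hTeq (hmem hu) (hmem hv), hDeq (hmem hu) (hmem hv)]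
    rw [hcongr, hA]
    simp only
    linarith
  have hEZ₁ : ∫ ω, Z₁ ω ∂P = ∫ u in (0 : ℝ)..1, A u := by
    have h := integral_indicator_mul_comp hU hV hUunif hT hM hdT
      (h := fun _ => 1) continuous_const (K := 1) (by simp)
    simp only [mul_one] at h
    rw [integral_congr_ae hZ₁ae, h]
  have hEZ₂ : ∫ ω, Z₂ ω ∂P = ∫ u in (0 : ℝ)..1, (A 1 - A u) / 2 := by
    rw [integral_congr_ae hZ₂ae]
    exact integral_comp_eq_of_map_eq (f := fun u => (A 1 - A u) / 2) hU hUunif (by fun_prop)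
  have hEZ₁Z₂ : ∫ ω, Z₁ ω * Z₂ ω ∂P = ∫ u in (0 : ℝ)..1, A u * ((A 1 - A u) / 2) := by
    rw [← integral_indicator_mul_comp hU hV hUunif hT hM hdT
      (h := fun u => (A 1 - A u) / 2) (by fun_prop) (K := (M ^ 2 + M ^ 2) / 2) fun u => by
        rw [abs_div, abs_two]
        gcongr
        exact (abs_sub _ _).trans (add_le_add (hAbound 1) (hAbound u))]
    refine integral_congr_ae ?_
    filter_upwards [hZ₁ae, hZ₂ae] with ω h₁ h₂
    rw [h₁, h₂]
  have hmean : ∫ u in (0 : ℝ)..1, ∫ v in (0 : ℝ)..1, τ u v ^ 2 = ∫ u in (0 : ℝ)..1, A u :=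
    intervalIntegral.integral_congr fun u hu => hAeq u (hmem hu)
  have hsecond : ∫ u in (0 : ℝ)..1, ∫ v in (0 : ℝ)..1, ∫ w in (0 : ℝ)..1,
      τ u v ^ 2 * τ u w ^ 2 = ∫ u in (0 : ℝ)..1, A u ^ 2 := by
    refine intervalIntegral.integral_congr fun u hu => ?_
    simp only [intervalIntegral.integral_const_mul, intervalIntegral.integral_mul_const,
      hAeq u (hmem hu)]
    ring
  have hmeanZ₂ : ∫ u in (0 : ℝ)..1, (A 1 - A u) / 2 = (A 1 - ∫ u in (0 : ℝ)..1, A u) / 2 := by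
    rw [intervalIntegral.integral_div, intervalIntegral.integral_sub (by simp)
      (hAcont.intervalIntegrable _ _)]
    simp
  have hmeanprod : ∫ u in (0 : ℝ)..1, A u * ((A 1 - A u) / 2) =
      (A 1 * (∫ u in (0 : ℝ)..1, A u) - ∫ u in (0 : ℝ)..1, A u ^ 2) / 2 := by
    rw [← intervalIntegral.integral_const_mul, ← intervalIntegral.integral_sub
      (Continuous.intervalIntegrable (by fun_prop) _ _)
      (Continuous.intervalIntegrable (by fun_prop) _ _),
      ← intervalIntegral.integral_div]
    refine intervalIntegral.integral_congr fun u _ => ?_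
    ring
  rw [hEZ₁Z₂, hEZ₁, hEZ₂, hmean, hsecond, hmeanZ₂, hmeanprod]
  ring
end
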